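/- arXiv:math/0008132 — 9 statements merged into one kernel-verified Lean document; each statement's English description precedes it below -/
import Mathlib

section
/- Tijdeman's Conjecture (mod 900) is false. Specifically, with A and B the explicit 30-element integer sets below, the reductions Ā, B̄ of A and B modulo 900 give a factorization Ā ⊕ B̄ = ℤ/900ℤ, i.e. the map A × B → ℤ/900ℤ, (a,b) ↦ (a + b) mod 900, is a bijection; moreover 0 ∈ A ∩ B, gcd{a : a ∈ A} = 1, and gcd{b : b ∈ B} = 1. -/
/-- The set `A = {0,36,72,108,144} ⊕ {0,100,200} ⊕ {0,225}` of 30 integers. -/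
def tijA : Finset ℤ :=
  (Finset.range 5 ×ˢ Finset.range 3 ×ˢ Finset.range 2).image
    (fun p => 36 * (p.1 : ℤ) + 100 * (p.2.1 : ℤ) + 225 * (p.2.2 : ℤ))

/-- The explicit 30-element set `B`. -/
def tijB : Finset ℤ :=
  {0, 30, 60, 126, 180, 210, 220, 240, 300, 306,
   330, 360, 375, 390, 480, 486, 510, 520, 540, 570,
   660, 666, 690, 750, 780, 820, 825, 840, 846, 870}

/-- The elements of `B` as natural numbers. -/
def tijBList : List ℕ :=
  [0, 30, 60, 126, 180, 210, 220, 240, 300, 306,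
   330, 360, 375, 390, 480, 486, 510, 520, 540, 570,
   660, 666, 690, 750, 780, 820, 825, 840, 846, 870]

/-- The elements of `A` as natural numbers. -/
def tijAList : List ℕ :=
  [0, 36, 72, 108, 144, 100, 136, 172, 208, 244, 200, 236, 272, 308, 344,
   225, 261, 297, 333, 369, 325, 361, 397, 433, 469, 425, 461, 497, 533, 569]

/-- Boolean test for bit `i` of the bit mask of `B`. -/
def tijBit (i : ℕ) : Bool :=
  Nat.beq (Nat.mod (Nat.shiftRight 7872202442832309285122356156674478110246395575087904437885688035722072668159109433435218865154067281574674507836454826685025152220055132299734524041624849960439711682641457996873450160851886408272663230377804491173309055796270803949288731978325133250171789901825 i) 2) 1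

lemma tij_bit : ((List.range 900).all fun i =>
    !(tijBit i) || tijBList.any fun b => Nat.beq b i) = true := by
  decide +kernel

lemma tij_cover : ((List.range 900).all fun n =>
    tijAList.any fun a => tijBit (Nat.mod (Nat.sub (Nat.add n 900) a) 900)) = true := by
  decide +kernel

lemma tij_memA : ∀ a ∈ tijAList, (a : ℤ) ∈ tijA := by decide +kernel

lemma tij_memB : ∀ b ∈ tijBList, (b : ℤ) ∈ tijB := by decide +kernel

lemma tij_leA : ∀ a ∈ tijAList, a ≤ 900 := by decide +kernel

/-- Tijdeman's Conjecture (mod 900) is false: the reductions of `A` and `B` modulo 900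
give a factorization `Ā ⊕ B̄ = ℤ/900ℤ`, `0 ∈ A ∩ B`, and both `gcd A = 1` and
`gcd B = 1`. -/
theorem stmt0 :
    Function.Bijective (fun p : ↥tijA × ↥tijB => (((p.1 : ℤ) + (p.2 : ℤ)) : ZMod 900)) ∧
    (0 : ℤ) ∈ tijA ∧ (0 : ℤ) ∈ tijB ∧
    tijA.gcd id = 1 ∧ tijB.gcd id = 1 := by
  have hA := tij_memA
  have hB := tij_memB
  refine ⟨?_, hA 0 (by decide), hB 0 (by decide), ?_, ?_⟩
  · rw [Fintype.bijective_iff_surjective_and_card]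
    constructor
    · intro z
      have hz : z.val < 900 := ZMod.val_lt z
      have h := List.all_eq_true.1 tij_cover z.val (List.mem_range.2 hz)
      obtain ⟨a, ha, h⟩ := List.any_eq_true.1 h
      have hlt : Nat.mod (Nat.sub (Nat.add z.val 900) a) 900 < 900 :=
        Nat.mod_lt _ (by norm_num)
      have hbit := List.all_eq_true.1 tij_bit _ (List.mem_range.2 hlt)
      rw [h, Bool.not_true, Bool.false_or] at hbit
      obtain ⟨b, hb, h⟩ := List.any_eq_true.1 hbit
      have h : b = (z.val + 900 - a) % 900 := Nat.eq_of_beq_eq_true h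
      have hle := tij_leA a ha
      refine ⟨(⟨(a : ℤ), hA a ha⟩, ⟨(b : ℤ), hB b hb⟩), ?_⟩
      have key : a + b ≡ z.val [MOD 900] := by
        unfold Nat.ModEq
        omega
      have := (ZMod.natCast_eq_natCast_iff _ _ _).2 key
      rw [ZMod.natCast_zmod_val] at this
      rw [← this]
      push_cast
      rfl
    · have h1 : tijA.card = 30 := by decide +kernel
      have h2 : tijB.card = 30 := by decide +kernel
      rw [Fintype.card_prod, Fintype.card_coe, Fintype.card_coe, h1, h2, ZMod.card]
  · decide +kernel
  · decide +kernel
end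

section
/- The factorization Ā ⊕ B̄ = ℤ/900ℤ given by the explicit sets A and B is quasiperiodic: B is the disjoint union of the three 10-element sets B₁ = {0, 126, 180, 306, 360, 486, 540, 666, 820, 846}, B₂ = {30, 210, 220, 300, 390, 480, 570, 660, 750, 840}, B₃ = {60, 240, 330, 375, 510, 520, 690, 780, 825, 870}, the set H = {0, 300, 600} reduces mod 900 to a subgroup of ℤ/900ℤ, and as subsets of ℤ/900ℤ one has Ā + B̄₂ = Ā + B̄₁ + 300 and Ā + B̄₃ = Ā + B̄₁ + 600 (and trivially Ā + B̄₁ = Ā + B̄₁ + 0). -/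
open Pointwise

def tijB1 : Finset ℤ := {0, 126, 180, 306, 360, 486, 540, 666, 820, 846}

def tijB2 : Finset ℤ := {30, 210, 220, 300, 390, 480, 570, 660, 750, 840}

def tijB3 : Finset ℤ := {60, 240, 330, 375, 510, 520, 690, 780, 825, 870}

/-- Reduction of a finite set of integers modulo 900, as a subset of `ℤ/900ℤ`. -/
def red (S : Finset ℤ) : Set (ZMod 900) := (fun a : ℤ => (a : ZMod 900)) '' ↑S

/-- The elements of `A` as natural numbers. -/
def listA : List ℕ := [0, 36, 72, 100, 108, 136, 144, 172, 200, 208, 225, 236, 244, 261, 272, 297, 308, 325, 333, 344, 361, 369, 397, 425, 433, 461, 469, 497, 533, 569]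

/-- Bit masks of `B`, `B₁`, `B₂`, `B₃`. -/
def mB : ℕ := 7872202442832309285122356156674478110246395575087904437885688035722072668159109433435218865154067281574674507836454826685025152220055132299734524041624849960439711682641457996873450160851886408272663230377804491173309055796270803949288731978325133250171789901825
def mB1 : ℕ := 469219808792213666344623431266883225139318590495706073929274634034414806201229742516176979725166620213626718052231375284011082890734557039434873592466646785087329314679471231029111014910313507091484628536433301978130797951168718512081837459234385584717825
def mB2 : ℕ := 7331559403129590068331208692943145175157620968237504558968196589738461917899588135320564697472165275751582062655410501765704093780361515065725192467732948086401677400458914667903312726318344678068147316032349450146349806028875735842620153840091004928000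
def mB3 : ℕ := 7872201966280941089779099743719838150420025260611692973942109547479242044005841314305888213656522858935889018458154711798239366443268147784815969541026065026059978508910465916943304463837558771640811460825028638707657627519123046751694484053867520175695200256000

/-- Boolean test for `n ∈ Ā + S̄`, where `S` has bit mask `m`. -/
def chk (m n : ℕ) : Bool := listA.any fun a => Nat.testBit m ((n + 900 - a) % 900)

/-- The set of integers encoded by a bit mask. -/
def decode (m : ℕ) : Finset ℤ :=
  (((List.range 900).filter fun n => Nat.testBit m n).map fun n : ℕ => (n : ℤ)).toFinset

theorem mem_decode (m : ℕ) (k : ℤ) :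
    k ∈ decode m ↔ ∃ n : ℕ, (n < 900 ∧ Nat.testBit m n = true) ∧ (n : ℤ) = k := by
  simp [decode]

theorem tijA_eq : tijA = (listA.map fun n : ℕ => (n : ℤ)).toFinset := by decide +kernel
theorem tijB_eq : tijB = decode mB := by decide +kernel
theorem tijB1_eq : tijB1 = decode mB1 := by decide +kernel
theorem tijB2_eq : tijB2 = decode mB2 := by decide +kernel
theorem tijB3_eq : tijB3 = decode mB3 := by decide +kernel

theorem mem_tijA (k : ℤ) : k ∈ tijA ↔ ∃ n : ℕ, n ∈ listA ∧ (n : ℤ) = k := by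
  simp [tijA_eq]

theorem listA_lt : ∀ a ∈ listA, a < 900 := by decide +kernel

theorem chk_iff (m n : ℕ) :
    chk m n = true ↔ ∃ a ∈ listA, Nat.testBit m ((n + 900 - a) % 900) = true := by
  simp [chk]

theorem cast_back (x : ZMod 900) (a : ℕ) (ha : a < 900) :
    (a : ZMod 900) + (((x.val + 900 - a) % 900 : ℕ) : ZMod 900) = x := by
  have h : ((a + (x.val + 900 - a) % 900 : ℕ) : ZMod 900) = (x.val : ZMod 900) := by
    rw [ZMod.natCast_eq_natCast_iff]
    unfold Nat.ModEq
    omega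
  rw [ZMod.natCast_zmod_val] at h
  rw [Nat.cast_add] at h
  exact h

theorem mem_sum (m : ℕ) (x : ZMod 900) :
    x ∈ red tijA + red (decode m) ↔ chk m x.val = true := by
  rw [chk_iff, Set.mem_add]
  constructor
  · rintro ⟨_, ⟨a', ha, rfl⟩, _, ⟨b', hb, rfl⟩, rfl⟩
    obtain ⟨a, haL, rfl⟩ := (mem_tijA _).1 (Finset.mem_coe.1 ha)
    obtain ⟨b, ⟨hb, hm⟩, rfl⟩ := (mem_decode _ _).1 (Finset.mem_coe.1 hb)
    refine ⟨a, haL, ?_⟩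
    have hlt := listA_lt a haL
    have e : (((a : ℤ) : ZMod 900) + ((b : ℤ) : ZMod 900)).val = (a + b) % 900 := by
      rw [← ZMod.val_natCast]
      push_cast
      rfl
    have e2 : ((a + b) % 900 + 900 - a) % 900 = b := by omega
    simp only [e, e2, hm]
  · rintro ⟨a, ha, hm⟩
    refine ⟨_, ⟨(a : ℤ), Finset.mem_coe.2 ((mem_tijA _).2 ⟨a, ha, rfl⟩), rfl⟩, _,
      ⟨(((x.val + 900 - a) % 900 : ℕ) : ℤ), Finset.mem_coe.2 ((mem_decode _ _).2
        ⟨_, ⟨Nat.mod_lt _ (by norm_num), hm⟩, rfl⟩), rfl⟩, ?_⟩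
    have := cast_back x a (listA_lt a ha)
    simpa only [Int.cast_natCast] using this

theorem chk_all : ∀ n < 900, chk mB n = true := by decide +kernel
theorem chk_two : ∀ n < 900, chk mB2 n = chk mB1 ((n + 600) % 900) := by decide +kernel
theorem chk_three : ∀ n < 900, chk mB3 n = chk mB1 ((n + 300) % 900) := by decide +kernel

theorem shift_eq (m m' s t : ℕ) (hst : s + t = 900)
    (h : ∀ n < 900, chk m' n = chk m ((n + t) % 900)) :
    red tijA + red (decode m') = red tijA + red (decode m) + {((s : ℤ) : ZMod 900)} := by
  have key : ((s : ℤ) : ZMod 900) + (t : ZMod 900) = 0 := by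
    have : ((s + t : ℕ) : ZMod 900) = 0 := by rw [hst]; rfl
    push_cast at this
    exact_mod_cast this
  ext x
  have e : (x + (t : ZMod 900)).val = (x.val + t) % 900 := by
    rw [← ZMod.val_natCast]
    push_cast
    rw [ZMod.natCast_zmod_val]
  rw [mem_sum, h _ (ZMod.val_lt x), ← e, ← mem_sum]
  rw [Set.add_singleton, Set.mem_image]
  constructor
  · intro hx
    exact ⟨_, hx, by linear_combination key⟩
  · rintro ⟨y, hy, rfl⟩
    have : y + ((s : ℤ) : ZMod 900) + (t : ZMod 900) = y := by linear_combination key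
    rwa [this]

theorem bij :
    Function.Bijective
      (fun p : ↥tijA × ↥tijB => (((p.1 : ℤ) + (p.2 : ℤ)) : ZMod 900)) := by
  rw [Fintype.bijective_iff_surjective_and_card]
  constructor
  · intro x
    have hx := (mem_sum mB x).2 (chk_all _ (ZMod.val_lt x))
    rw [← tijB_eq, Set.mem_add] at hx
    obtain ⟨_, ⟨a, ha, rfl⟩, _, ⟨b, hb, rfl⟩, h⟩ := hx
    exact ⟨(⟨a, ha⟩, ⟨b, hb⟩), h⟩
  · have hA : tijA.card = 30 := by decide +kernel
    have hB : tijB.card = 30 := by decide +kernel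
    rw [Fintype.card_prod, Fintype.card_coe, Fintype.card_coe, hA, hB, ZMod.card]

/-- The factorization `Ā ⊕ B̄ = ℤ/900ℤ` is quasiperiodic: `B` is the disjoint union of
`B₁, B₂, B₃`, the set `{0, 300, 600}` reduces mod 900 to a subgroup of `ℤ/900ℤ`, and
`Ā + B̄₂ = Ā + B̄₁ + 300`, `Ā + B̄₃ = Ā + B̄₁ + 600` (and trivially
`Ā + B̄₁ = Ā + B̄₁ + 0`). -/
theorem stmt1 :
    Function.Bijective (fun p : ↥tijA × ↥tijB => (((p.1 : ℤ) + (p.2 : ℤ)) : ZMod 900)) ∧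
    (tijB1 ∪ tijB2 ∪ tijB3 = tijB) ∧
    Disjoint tijB1 tijB2 ∧ Disjoint tijB1 tijB3 ∧ Disjoint tijB2 tijB3 ∧
    (∃ H : AddSubgroup (ZMod 900),
      (H : Set (ZMod 900)) = {((0 : ℤ) : ZMod 900), ((300 : ℤ) : ZMod 900), ((600 : ℤ) : ZMod 900)}) ∧
    red tijA + red tijB2 = red tijA + red tijB1 + {((300 : ℤ) : ZMod 900)} ∧
    red tijA + red tijB3 = red tijA + red tijB1 + {((600 : ℤ) : ZMod 900)} ∧
    red tijA + red tijB1 = red tijA + red tijB1 + {((0 : ℤ) : ZMod 900)} := by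
  refine ⟨bij, by decide +kernel, by decide +kernel, by decide +kernel, by decide +kernel,
    ⟨⟨⟨⟨{((0 : ℤ) : ZMod 900), ((300 : ℤ) : ZMod 900), ((600 : ℤ) : ZMod 900)}, ?_⟩, ?_⟩, ?_⟩,
      rfl⟩, ?_, ?_, ?_⟩
  · rintro a b (rfl | rfl | rfl) (rfl | rfl | rfl) <;>
      simp only [Set.mem_insert_iff, Set.mem_singleton_iff] <;> decide +kernel
  · simp
  · rintro a (rfl | rfl | rfl) <;>
      simp only [Set.mem_insert_iff, Set.mem_singleton_iff] <;> decide +kernel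
  · rw [tijB1_eq, tijB2_eq]
    exact shift_eq mB1 mB2 300 600 rfl chk_two
  · rw [tijB1_eq, tijB3_eq]
    exact shift_eq mB1 mB3 600 300 rfl chk_three
  · simp
end

section
/- For all a₁, a₂ ∈ A: if 5 divides a₁ − a₂ then 25 divides a₁ − a₂; if 3 divides a₁ − a₂ then 9 divides a₁ − a₂; and if 2 divides a₁ − a₂ then 4 divides a₁ − a₂. Consequently, for all a₁, a₂ ∈ A the exponential sum Σ_{a ∈ A} e^{2πi (a₁ − a₂) a / 900} is nonzero. -/
/-- The geometric sum of `n` terms of `e^{2πi d / n²}` is nonzero if `n ∣ d → n² ∣ d`. -/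
lemma geom_ne_zero (n : ℕ) (hn : n ≠ 0) (d : ℤ) (h : (n : ℤ) ∣ d → (n : ℤ) ^ 2 ∣ d) :
    (∑ i ∈ Finset.range n,
      Complex.exp (2 * Real.pi * Complex.I * d / (n : ℂ) ^ 2) ^ i) ≠ 0 := by
  intro h0
  have hn' : (n : ℂ) ≠ 0 := by exact_mod_cast hn
  have hpi : (2 * Real.pi * Complex.I : ℂ) ≠ 0 := Complex.two_pi_I_ne_zero
  have h1 := geom_sum_mul (Complex.exp (2 * Real.pi * Complex.I * d / (n : ℂ) ^ 2)) n
  rw [h0, zero_mul, eq_comm, sub_eq_zero, ← Complex.exp_nat_mul, Complex.exp_eq_one_iff] at h1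
  obtain ⟨m, hm⟩ := h1
  have hd : (d : ℂ) = n * m := by
    field_simp at hm
    linear_combination hm
  have hd' : (n : ℤ) ∣ d := ⟨m, by exact_mod_cast hd⟩
  obtain ⟨c, hc⟩ := h hd'
  have hx : Complex.exp (2 * Real.pi * Complex.I * d / (n : ℂ) ^ 2) = 1 := by
    rw [Complex.exp_eq_one_iff]
    refine ⟨c, ?_⟩
    rw [hc]
    push_cast
    field_simp
  rw [hx] at h0
  simp at h0
  exact hn h0

lemma tij_dvd : ∀ a₁ ∈ tijA, ∀ a₂ ∈ tijA,
      (5 ∣ a₁ - a₂ → 25 ∣ a₁ - a₂) ∧ (3 ∣ a₁ - a₂ → 9 ∣ a₁ - a₂) ∧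
        (2 ∣ a₁ - a₂ → 4 ∣ a₁ - a₂) := by
  intro a₁ h₁ a₂ h₂
  simp only [tijA, Finset.mem_image, Finset.mem_product, Finset.mem_range, Prod.exists] at h₁ h₂
  obtain ⟨i, j, k, ⟨hi, hj, hk⟩, rfl⟩ := h₁
  obtain ⟨i', j', k', ⟨hi', hj', hk'⟩, rfl⟩ := h₂
  refine ⟨fun h => ?_, fun h => ?_, fun h => ?_⟩
  · have e : i = i' := by
      have : (5 : ℤ) ∣ (i : ℤ) - i' := by omega
      omega
    subst e
    omega
  · have e : j = j' := by
      have : (3 : ℤ) ∣ (j : ℤ) - j' := by omega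
      omega
    subst e
    omega
  · have e : k = k' := by
      have : (2 : ℤ) ∣ (k : ℤ) - k' := by omega
      omega
    subst e
    omega

lemma tij_sum (d : ℤ) :
    (∑ a ∈ tijA, Complex.exp (2 * Real.pi * Complex.I * d * a / 900)) =
      (∑ i ∈ Finset.range 5, Complex.exp (2 * Real.pi * Complex.I * d / ((5 : ℕ) : ℂ) ^ 2) ^ i) *
      ((∑ i ∈ Finset.range 3, Complex.exp (2 * Real.pi * Complex.I * d / ((3 : ℕ) : ℂ) ^ 2) ^ i) *
      (∑ i ∈ Finset.range 2, Complex.exp (2 * Real.pi * Complex.I * d / ((2 : ℕ) : ℂ) ^ 2) ^ i)) := by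
  rw [tijA, Finset.sum_image]
  · rw [Finset.sum_product, Finset.sum_mul_sum, Finset.sum_mul]
    simp only [Finset.sum_product, Finset.mul_sum]
    refine Finset.sum_congr rfl fun i _ => Finset.sum_congr rfl fun j _ =>
      Finset.sum_congr rfl fun k _ => ?_
    rw [← Complex.exp_nat_mul, ← Complex.exp_nat_mul, ← Complex.exp_nat_mul, ← Complex.exp_add,
      ← Complex.exp_add]
    congr 1
    push_cast
    ring
  · rintro ⟨i, j, k⟩ h₁ ⟨i', j', k'⟩ h₂ h
    simp only [Finset.coe_product, Set.mem_prod, Finset.coe_range, Set.mem_Iio] at h₁ h₂ h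
    simp only [Prod.mk.injEq]
    omega

/-- For all `a₁, a₂ ∈ A`: if `5 ∣ a₁ - a₂` then `25 ∣ a₁ - a₂`; if `3 ∣ a₁ - a₂` then
`9 ∣ a₁ - a₂`; if `2 ∣ a₁ - a₂` then `4 ∣ a₁ - a₂`.  Consequently for all
`a₁, a₂ ∈ A` the exponential sum `Σ_{a ∈ A} e^{2πi (a₁ - a₂) a / 900}` is nonzero. -/
theorem stmt3 :
    (∀ a₁ ∈ tijA, ∀ a₂ ∈ tijA,
      (5 ∣ a₁ - a₂ → 25 ∣ a₁ - a₂) ∧ (3 ∣ a₁ - a₂ → 9 ∣ a₁ - a₂) ∧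
        (2 ∣ a₁ - a₂ → 4 ∣ a₁ - a₂)) ∧
    (∀ a₁ ∈ tijA, ∀ a₂ ∈ tijA,
      (∑ a ∈ tijA, Complex.exp (2 * Real.pi * Complex.I * (a₁ - a₂) * a / 900)) ≠ 0) := by
  refine ⟨tij_dvd, fun a₁ h₁ a₂ h₂ => ?_⟩
  obtain ⟨h5, h3, h2⟩ := tij_dvd a₁ h₁ a₂ h₂
  have h := tij_sum (a₁ - a₂)
  simp only [← Int.cast_sub]
  rw [h]
  exact mul_ne_zero (geom_ne_zero 5 (by norm_num) _ (by simpa using h5))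
    (mul_ne_zero (geom_ne_zero 3 (by norm_num) _ (by simpa using h3))
      (geom_ne_zero 2 (by norm_num) _ (by simpa using h2)))
end

section
/- For every integer k, the exponential sum Σ_{b ∈ B} e^{2πi k b / 900} equals 0 if and only if k is not divisible by 900 and Σ_{a ∈ A} e^{2πi k a / 900} ≠ 0. Equivalently, the set of integers k with Σ_{b ∈ B} e^{2πi k b / 900} ≠ 0 is exactly the union of 900ℤ with the set of integers k satisfying (5 ∣ k ∧ 25 ∤ k) ∨ (3 ∣ k ∧ 9 ∤ k) ∨ (2 ∣ k ∧ 4 ∤ k). -/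
open Polynomial in
lemma tij_nonzero {z : ℂ} {n m : ℕ} (hz : IsPrimitiveRoot z n) (hn : 0 < n)
    (hm : IsPrimitiveRoot ((m : ℕ) : ZMod 1801) n)
    (B : Finset ℕ) (hB : (∑ b ∈ B, m ^ b) % 1801 ≠ 0) :
    ∑ b ∈ B, z ^ b ≠ 0 := by
  intro h
  have : Fact (Nat.Prime 1801) := ⟨by norm_num⟩
  set P : ℤ[X] := ∑ b ∈ B, X ^ b with hP
  have h1 : aeval z P = 0 := by simp [hP, h]
  have h2 : cyclotomic n ℤ ∣ P := by
    rw [cyclotomic_eq_minpoly hz hn]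
    exact minpoly.isIntegrallyClosed_dvd (hz.isIntegral hn) h1
  have h3 : aeval ((m : ℕ) : ZMod 1801) P = 0 := by
    obtain ⟨Q, hQ⟩ := h2
    have h4 : aeval ((m : ℕ) : ZMod 1801) (cyclotomic n ℤ) = 0 := by
      have h5 := hm.isRoot_cyclotomic hn
      rw [aeval_def, ← eval_map]
      simpa [map_cyclotomic] using h5
    rw [hQ, map_mul, h4, zero_mul]
  apply hB
  have h6 : ((∑ b ∈ B, m ^ b : ℕ) : ZMod 1801) = 0 := by
    rw [← h3]; simp [hP]
  exact Nat.mod_eq_zero_of_dvd ((ZMod.natCast_eq_zero_iff _ _).1 h6)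

lemma tij_pow_eq_one (j : ℕ) : (((121 : ℕ) : ZMod 1801)) ^ j = 1 ↔ 121 ^ j % 1801 = 1 := by
  rw [← Nat.cast_pow, ← Nat.cast_one, ZMod.natCast_eq_natCast_iff']

lemma tij_prim : IsPrimitiveRoot ((121 : ℕ) : ZMod 1801) 900 := by
  have h : orderOf ((121 : ℕ) : ZMod 1801) = 900 := by
    apply orderOf_eq_of_pow_and_pow_div_prime (by norm_num)
    · rw [tij_pow_eq_one]; decide +kernel
    · intro p hp hd
      have : p ∈ Nat.primeFactors 900 := by simp [hp, hd]
      have h9 : p ∈ ({2, 3, 5} : Finset ℕ) := by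
        have h8 : p ∣ 2 ^ 2 * 3 ^ 2 * 5 ^ 2 := by simpa using hd
        rcases (hp.dvd_mul).1 h8 with h8 | h8
        · rcases (hp.dvd_mul).1 h8 with h8 | h8
          · simp [(Nat.prime_dvd_prime_iff_eq hp (by norm_num)).1 (hp.dvd_of_dvd_pow h8)]
          · simp [(Nat.prime_dvd_prime_iff_eq hp (by norm_num)).1 (hp.dvd_of_dvd_pow h8)]
        · simp [(Nat.prime_dvd_prime_iff_eq hp (by norm_num)).1 (hp.dvd_of_dvd_pow h8)]
      rw [Ne, tij_pow_eq_one]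
      fin_cases h9 <;> decide +kernel
  rw [← h]; exact IsPrimitiveRoot.orderOf _

/-- `B` as a set of naturals. -/
def tijBN : Finset ℕ :=
  {0, 30, 60, 126, 180, 210, 220, 240, 300, 306,
   330, 360, 375, 390, 480, 486, 510, 520, 540, 570,
   660, 666, 690, 750, 780, 820, 825, 840, 846, 870}

/-- The condition on the order `n` of the root of unity. -/
def tijCond (n : ℕ) : Prop :=
  (n ∣ 180 ∧ ¬ n ∣ 36) ∨ (n ∣ 300 ∧ ¬ n ∣ 100) ∨ (n ∣ 450 ∧ ¬ n ∣ 225)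

instance (n : ℕ) : Decidable (tijCond n) := by unfold tijCond; infer_instance

lemma tij_good {z : ℂ} {n : ℕ} (hz : IsPrimitiveRoot z n) (hn : n ∣ 900)
    (hc : n = 1 ∨ tijCond n) : ∑ b ∈ tijBN, z ^ b ≠ 0 := by
  have hpos : 0 < n := Nat.pos_of_dvd_of_pos hn (by norm_num)
  have hm : IsPrimitiveRoot ((121 ^ (900 / n) % 1801 : ℕ) : ZMod 1801) n := by
    rw [ZMod.natCast_mod, Nat.cast_pow]
    exact tij_prim.pow (by norm_num) (Nat.div_mul_cancel hn).symm
  refine tij_nonzero hz hpos hm _ ?_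
  have key : ∀ n ∈ Nat.divisors 900, (n = 1 ∨ tijCond n) →
      (∑ b ∈ tijBN, (121 ^ (900 / n) % 1801) ^ b) % 1801 ≠ 0 := by
    decide +kernel
  exact key n (by simp [hn]) hc

lemma tij_expand (z : ℂ) : ∑ b ∈ tijBN, z ^ b = z ^ 0 + z ^ 30 + z ^ 60 + z ^ 126 + z ^ 180 + z ^ 210 + z ^ 220 + z ^ 240 + z ^ 300 + z ^ 306 + z ^ 330 + z ^ 360 + z ^ 375 + z ^ 390 + z ^ 480 + z ^ 486 + z ^ 510 + z ^ 520 + z ^ 540 + z ^ 570 + z ^ 660 + z ^ 666 + z ^ 690 + z ^ 750 + z ^ 780 + z ^ 820 + z ^ 825 + z ^ 840 + z ^ 846 + z ^ 870 := by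
  unfold tijBN
  repeat rw [Finset.sum_insert (by decide)]
  rw [Finset.sum_singleton]
  ring

lemma tij_cyc {z : ℂ} {n : ℕ} (hz : IsPrimitiveRoot z n) (hn : 0 < n) {p d : ℕ}
    (hp : 1 < p) (h : n = d * p) : ∑ i ∈ Finset.range p, (z ^ d) ^ i = 0 :=
  (hz.pow hn h).geom_sum_eq_zero hp

lemma tij_mod {z : ℂ} {n : ℕ} (hz : IsPrimitiveRoot z n) (m r : ℕ) (h : m % n = r) :
    z ^ m = z ^ r := by
  rw [← h, hz.eq_orderOf, pow_mod_orderOf]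

lemma tij_zero4 {z : ℂ} (hz : IsPrimitiveRoot z 4) : ∑ b ∈ tijBN, z ^ b = 0 := by
  have c2 := tij_cyc hz (by norm_num) (p := 2) (d := 2) (by norm_num) (by norm_num)
  simp only [Finset.sum_range_succ, Finset.sum_range_zero, ← pow_mul] at c2
  have hphi : z ^ 0 + z ^ 2 = 0 := by
    linear_combination (z ^ 0) * c2
  rw [tij_expand]
  have e30 := tij_mod hz 30 2 (by norm_num)
  have e60 := tij_mod hz 60 0 (by norm_num)
  have e126 := tij_mod hz 126 2 (by norm_num)
  have e180 := tij_mod hz 180 0 (by norm_num)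
  have e210 := tij_mod hz 210 2 (by norm_num)
  have e220 := tij_mod hz 220 0 (by norm_num)
  have e240 := tij_mod hz 240 0 (by norm_num)
  have e300 := tij_mod hz 300 0 (by norm_num)
  have e306 := tij_mod hz 306 2 (by norm_num)
  have e330 := tij_mod hz 330 2 (by norm_num)
  have e360 := tij_mod hz 360 0 (by norm_num)
  have e375 := tij_mod hz 375 3 (by norm_num)
  have e390 := tij_mod hz 390 2 (by norm_num)
  have e480 := tij_mod hz 480 0 (by norm_num)
  have e486 := tij_mod hz 486 2 (by norm_num)
  have e510 := tij_mod hz 510 2 (by norm_num)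
  have e520 := tij_mod hz 520 0 (by norm_num)
  have e540 := tij_mod hz 540 0 (by norm_num)
  have e570 := tij_mod hz 570 2 (by norm_num)
  have e660 := tij_mod hz 660 0 (by norm_num)
  have e666 := tij_mod hz 666 2 (by norm_num)
  have e690 := tij_mod hz 690 2 (by norm_num)
  have e750 := tij_mod hz 750 2 (by norm_num)
  have e780 := tij_mod hz 780 0 (by norm_num)
  have e820 := tij_mod hz 820 0 (by norm_num)
  have e825 := tij_mod hz 825 1 (by norm_num)
  have e840 := tij_mod hz 840 0 (by norm_num)
  have e846 := tij_mod hz 846 2 (by norm_num)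
  have e870 := tij_mod hz 870 2 (by norm_num)
  linear_combination (14 * z ^ 0 + z ^ 1) * hphi + e30 + e60 + e126 + e180 + e210 + e220 + e240 + e300 + e306 + e330 + e360 + e375 + e390 + e480 + e486 + e510 + e520 + e540 + e570 + e660 + e666 + e690 + e750 + e780 + e820 + e825 + e840 + e846 + e870

lemma tij_zero9 {z : ℂ} (hz : IsPrimitiveRoot z 9) : ∑ b ∈ tijBN, z ^ b = 0 := by
  have c3 := tij_cyc hz (by norm_num) (p := 3) (d := 3) (by norm_num) (by norm_num)
  simp only [Finset.sum_range_succ, Finset.sum_range_zero, ← pow_mul] at c3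
  have hphi : z ^ 0 + z ^ 3 + z ^ 6 = 0 := by
    linear_combination (z ^ 0) * c3
  rw [tij_expand]
  have e30 := tij_mod hz 30 3 (by norm_num)
  have e60 := tij_mod hz 60 6 (by norm_num)
  have e126 := tij_mod hz 126 0 (by norm_num)
  have e180 := tij_mod hz 180 0 (by norm_num)
  have e210 := tij_mod hz 210 3 (by norm_num)
  have e220 := tij_mod hz 220 4 (by norm_num)
  have e240 := tij_mod hz 240 6 (by norm_num)
  have e300 := tij_mod hz 300 3 (by norm_num)
  have e306 := tij_mod hz 306 0 (by norm_num)
  have e330 := tij_mod hz 330 6 (by norm_num)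
  have e360 := tij_mod hz 360 0 (by norm_num)
  have e375 := tij_mod hz 375 6 (by norm_num)
  have e390 := tij_mod hz 390 3 (by norm_num)
  have e480 := tij_mod hz 480 3 (by norm_num)
  have e486 := tij_mod hz 486 0 (by norm_num)
  have e510 := tij_mod hz 510 6 (by norm_num)
  have e520 := tij_mod hz 520 7 (by norm_num)
  have e540 := tij_mod hz 540 0 (by norm_num)
  have e570 := tij_mod hz 570 3 (by norm_num)
  have e660 := tij_mod hz 660 3 (by norm_num)
  have e666 := tij_mod hz 666 0 (by norm_num)
  have e690 := tij_mod hz 690 6 (by norm_num)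
  have e750 := tij_mod hz 750 3 (by norm_num)
  have e780 := tij_mod hz 780 6 (by norm_num)
  have e820 := tij_mod hz 820 1 (by norm_num)
  have e825 := tij_mod hz 825 6 (by norm_num)
  have e840 := tij_mod hz 840 3 (by norm_num)
  have e846 := tij_mod hz 846 0 (by norm_num)
  have e870 := tij_mod hz 870 6 (by norm_num)
  linear_combination (9 * z ^ 0 + z ^ 1) * hphi + e30 + e60 + e126 + e180 + e210 + e220 + e240 + e300 + e306 + e330 + e360 + e375 + e390 + e480 + e486 + e510 + e520 + e540 + e570 + e660 + e666 + e690 + e750 + e780 + e820 + e825 + e840 + e846 + e870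

lemma tij_zero25 {z : ℂ} (hz : IsPrimitiveRoot z 25) : ∑ b ∈ tijBN, z ^ b = 0 := by
  have c5 := tij_cyc hz (by norm_num) (p := 5) (d := 5) (by norm_num) (by norm_num)
  simp only [Finset.sum_range_succ, Finset.sum_range_zero, ← pow_mul] at c5
  have hphi : z ^ 0 + z ^ 5 + z ^ 10 + z ^ 15 + z ^ 20 = 0 := by
    linear_combination (z ^ 0) * c5
  rw [tij_expand]
  have e30 := tij_mod hz 30 5 (by norm_num)
  have e60 := tij_mod hz 60 10 (by norm_num)
  have e126 := tij_mod hz 126 1 (by norm_num)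
  have e180 := tij_mod hz 180 5 (by norm_num)
  have e210 := tij_mod hz 210 10 (by norm_num)
  have e220 := tij_mod hz 220 20 (by norm_num)
  have e240 := tij_mod hz 240 15 (by norm_num)
  have e300 := tij_mod hz 300 0 (by norm_num)
  have e306 := tij_mod hz 306 6 (by norm_num)
  have e330 := tij_mod hz 330 5 (by norm_num)
  have e360 := tij_mod hz 360 10 (by norm_num)
  have e375 := tij_mod hz 375 0 (by norm_num)
  have e390 := tij_mod hz 390 15 (by norm_num)
  have e480 := tij_mod hz 480 5 (by norm_num)
  have e486 := tij_mod hz 486 11 (by norm_num)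
  have e510 := tij_mod hz 510 10 (by norm_num)
  have e520 := tij_mod hz 520 20 (by norm_num)
  have e540 := tij_mod hz 540 15 (by norm_num)
  have e570 := tij_mod hz 570 20 (by norm_num)
  have e660 := tij_mod hz 660 10 (by norm_num)
  have e666 := tij_mod hz 666 16 (by norm_num)
  have e690 := tij_mod hz 690 15 (by norm_num)
  have e750 := tij_mod hz 750 0 (by norm_num)
  have e780 := tij_mod hz 780 5 (by norm_num)
  have e820 := tij_mod hz 820 20 (by norm_num)
  have e825 := tij_mod hz 825 0 (by norm_num)
  have e840 := tij_mod hz 840 15 (by norm_num)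
  have e846 := tij_mod hz 846 21 (by norm_num)
  have e870 := tij_mod hz 870 20 (by norm_num)
  linear_combination (5 * z ^ 0 + z ^ 1) * hphi + e30 + e60 + e126 + e180 + e210 + e220 + e240 + e300 + e306 + e330 + e360 + e375 + e390 + e480 + e486 + e510 + e520 + e540 + e570 + e660 + e666 + e690 + e750 + e780 + e820 + e825 + e840 + e846 + e870

lemma tij_zero36 {z : ℂ} (hz : IsPrimitiveRoot z 36) : ∑ b ∈ tijBN, z ^ b = 0 := by
  have c2 := tij_cyc hz (by norm_num) (p := 2) (d := 18) (by norm_num) (by norm_num)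
  simp only [Finset.sum_range_succ, Finset.sum_range_zero, ← pow_mul] at c2
  have c3 := tij_cyc hz (by norm_num) (p := 3) (d := 12) (by norm_num) (by norm_num)
  simp only [Finset.sum_range_succ, Finset.sum_range_zero, ← pow_mul] at c3
  have hphi : z ^ 0 - z ^ 6 + z ^ 12 = 0 := by
    linear_combination ( - z ^ 6) * c2 + (z ^ 0) * c3
  rw [tij_expand]
  have e60 := tij_mod hz 60 24 (by norm_num)
  have e126 := tij_mod hz 126 18 (by norm_num)
  have e180 := tij_mod hz 180 0 (by norm_num)
  have e210 := tij_mod hz 210 30 (by norm_num)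
  have e220 := tij_mod hz 220 4 (by norm_num)
  have e240 := tij_mod hz 240 24 (by norm_num)
  have e300 := tij_mod hz 300 12 (by norm_num)
  have e306 := tij_mod hz 306 18 (by norm_num)
  have e330 := tij_mod hz 330 6 (by norm_num)
  have e360 := tij_mod hz 360 0 (by norm_num)
  have e375 := tij_mod hz 375 15 (by norm_num)
  have e390 := tij_mod hz 390 30 (by norm_num)
  have e480 := tij_mod hz 480 12 (by norm_num)
  have e486 := tij_mod hz 486 18 (by norm_num)
  have e510 := tij_mod hz 510 6 (by norm_num)
  have e520 := tij_mod hz 520 16 (by norm_num)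
  have e540 := tij_mod hz 540 0 (by norm_num)
  have e570 := tij_mod hz 570 30 (by norm_num)
  have e660 := tij_mod hz 660 12 (by norm_num)
  have e666 := tij_mod hz 666 18 (by norm_num)
  have e690 := tij_mod hz 690 6 (by norm_num)
  have e750 := tij_mod hz 750 30 (by norm_num)
  have e780 := tij_mod hz 780 24 (by norm_num)
  have e820 := tij_mod hz 820 28 (by norm_num)
  have e825 := tij_mod hz 825 33 (by norm_num)
  have e840 := tij_mod hz 840 12 (by norm_num)
  have e846 := tij_mod hz 846 18 (by norm_num)
  have e870 := tij_mod hz 870 6 (by norm_num)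
  linear_combination (4 * z ^ 0 + z ^ 4 + 8 * z ^ 6 + z ^ 10 + 8 * z ^ 12 + z ^ 15 + z ^ 16 + 5 * z ^ 18 + z ^ 21) * hphi + e60 + e126 + e180 + e210 + e220 + e240 + e300 + e306 + e330 + e360 + e375 + e390 + e480 + e486 + e510 + e520 + e540 + e570 + e660 + e666 + e690 + e750 + e780 + e820 + e825 + e840 + e846 + e870

lemma tij_zero100 {z : ℂ} (hz : IsPrimitiveRoot z 100) : ∑ b ∈ tijBN, z ^ b = 0 := by
  have c2 := tij_cyc hz (by norm_num) (p := 2) (d := 50) (by norm_num) (by norm_num)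
  simp only [Finset.sum_range_succ, Finset.sum_range_zero, ← pow_mul] at c2
  have c5 := tij_cyc hz (by norm_num) (p := 5) (d := 20) (by norm_num) (by norm_num)
  simp only [Finset.sum_range_succ, Finset.sum_range_zero, ← pow_mul] at c5
  have hphi : z ^ 0 - z ^ 10 + z ^ 20 - z ^ 30 + z ^ 40 = 0 := by
    linear_combination ( - z ^ 10 - z ^ 30) * c2 + (z ^ 0) * c5
  rw [tij_expand]
  have e126 := tij_mod hz 126 26 (by norm_num)
  have e180 := tij_mod hz 180 80 (by norm_num)
  have e210 := tij_mod hz 210 10 (by norm_num)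
  have e220 := tij_mod hz 220 20 (by norm_num)
  have e240 := tij_mod hz 240 40 (by norm_num)
  have e300 := tij_mod hz 300 0 (by norm_num)
  have e306 := tij_mod hz 306 6 (by norm_num)
  have e330 := tij_mod hz 330 30 (by norm_num)
  have e360 := tij_mod hz 360 60 (by norm_num)
  have e375 := tij_mod hz 375 75 (by norm_num)
  have e390 := tij_mod hz 390 90 (by norm_num)
  have e480 := tij_mod hz 480 80 (by norm_num)
  have e486 := tij_mod hz 486 86 (by norm_num)
  have e510 := tij_mod hz 510 10 (by norm_num)
  have e520 := tij_mod hz 520 20 (by norm_num)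
  have e540 := tij_mod hz 540 40 (by norm_num)
  have e570 := tij_mod hz 570 70 (by norm_num)
  have e660 := tij_mod hz 660 60 (by norm_num)
  have e666 := tij_mod hz 666 66 (by norm_num)
  have e690 := tij_mod hz 690 90 (by norm_num)
  have e750 := tij_mod hz 750 50 (by norm_num)
  have e780 := tij_mod hz 780 80 (by norm_num)
  have e820 := tij_mod hz 820 20 (by norm_num)
  have e825 := tij_mod hz 825 25 (by norm_num)
  have e840 := tij_mod hz 840 40 (by norm_num)
  have e846 := tij_mod hz 846 46 (by norm_num)
  have e870 := tij_mod hz 870 70 (by norm_num)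
  linear_combination (2 * z ^ 0 + z ^ 6 + 4 * z ^ 10 + z ^ 16 + 5 * z ^ 20 + z ^ 25 + z ^ 26 + 5 * z ^ 30 + z ^ 35 + z ^ 36 + 5 * z ^ 40 + z ^ 46 + 2 * z ^ 50) * hphi + e126 + e180 + e210 + e220 + e240 + e300 + e306 + e330 + e360 + e375 + e390 + e480 + e486 + e510 + e520 + e540 + e570 + e660 + e666 + e690 + e750 + e780 + e820 + e825 + e840 + e846 + e870

lemma tij_zero225 {z : ℂ} (hz : IsPrimitiveRoot z 225) : ∑ b ∈ tijBN, z ^ b = 0 := by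
  have c3 := tij_cyc hz (by norm_num) (p := 3) (d := 75) (by norm_num) (by norm_num)
  simp only [Finset.sum_range_succ, Finset.sum_range_zero, ← pow_mul] at c3
  have c5 := tij_cyc hz (by norm_num) (p := 5) (d := 45) (by norm_num) (by norm_num)
  simp only [Finset.sum_range_succ, Finset.sum_range_zero, ← pow_mul] at c5
  have hphi : z ^ 0 - z ^ 15 + z ^ 45 - z ^ 60 + z ^ 75 - z ^ 105 + z ^ 120 = 0 := by
    linear_combination (z ^ 0 + z ^ 45) * c3 + ( - z ^ 15) * c5
  rw [tij_expand]
  have e240 := tij_mod hz 240 15 (by norm_num)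
  have e300 := tij_mod hz 300 75 (by norm_num)
  have e306 := tij_mod hz 306 81 (by norm_num)
  have e330 := tij_mod hz 330 105 (by norm_num)
  have e360 := tij_mod hz 360 135 (by norm_num)
  have e375 := tij_mod hz 375 150 (by norm_num)
  have e390 := tij_mod hz 390 165 (by norm_num)
  have e480 := tij_mod hz 480 30 (by norm_num)
  have e486 := tij_mod hz 486 36 (by norm_num)
  have e510 := tij_mod hz 510 60 (by norm_num)
  have e520 := tij_mod hz 520 70 (by norm_num)
  have e540 := tij_mod hz 540 90 (by norm_num)
  have e570 := tij_mod hz 570 120 (by norm_num)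
  have e660 := tij_mod hz 660 210 (by norm_num)
  have e666 := tij_mod hz 666 216 (by norm_num)
  have e690 := tij_mod hz 690 15 (by norm_num)
  have e750 := tij_mod hz 750 75 (by norm_num)
  have e780 := tij_mod hz 780 105 (by norm_num)
  have e820 := tij_mod hz 820 145 (by norm_num)
  have e825 := tij_mod hz 825 150 (by norm_num)
  have e840 := tij_mod hz 840 165 (by norm_num)
  have e846 := tij_mod hz 846 171 (by norm_num)
  have e870 := tij_mod hz 870 195 (by norm_num)
  linear_combination (z ^ 0 + 3 * z ^ 15 + 5 * z ^ 30 + z ^ 36 + 4 * z ^ 45 + z ^ 51 + 4 * z ^ 60 + z ^ 66 + z ^ 70 + 3 * z ^ 75 + z ^ 81 + z ^ 85 + 2 * z ^ 90 + z ^ 96 + z ^ 100) * hphi + e240 + e300 + e306 + e330 + e360 + e375 + e390 + e480 + e486 + e510 + e520 + e540 + e570 + e660 + e666 + e690 + e750 + e780 + e820 + e825 + e840 + e846 + e870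

lemma tij_zero900 {z : ℂ} (hz : IsPrimitiveRoot z 900) : ∑ b ∈ tijBN, z ^ b = 0 := by
  have c2 := tij_cyc hz (by norm_num) (p := 2) (d := 450) (by norm_num) (by norm_num)
  simp only [Finset.sum_range_succ, Finset.sum_range_zero, ← pow_mul] at c2
  have c3 := tij_cyc hz (by norm_num) (p := 3) (d := 300) (by norm_num) (by norm_num)
  simp only [Finset.sum_range_succ, Finset.sum_range_zero, ← pow_mul] at c3
  have c5 := tij_cyc hz (by norm_num) (p := 5) (d := 180) (by norm_num) (by norm_num)
  simp only [Finset.sum_range_succ, Finset.sum_range_zero, ← pow_mul] at c5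
  have hphi : z ^ 0 + z ^ 30 - z ^ 90 - z ^ 120 - z ^ 150 + z ^ 210 + z ^ 240 = 0 := by
    linear_combination ( - z ^ 150 + z ^ 240 + z ^ 270 + z ^ 420 + z ^ 450 + z ^ 600) * c2 + (z ^ 0 - z ^ 90 - z ^ 120 - z ^ 270 - z ^ 300 - z ^ 450) * c3 + (z ^ 30) * c5
  rw [tij_expand]
  linear_combination (z ^ 0 + z ^ 60 + z ^ 120 + z ^ 126 + z ^ 150 - z ^ 156 + z ^ 180 + z ^ 186 + z ^ 210 + z ^ 220 + z ^ 240 - z ^ 250 + z ^ 270 + z ^ 276 + z ^ 280 + 2 * z ^ 300 + z ^ 330 + z ^ 360 + z ^ 366 + z ^ 370 + z ^ 375 + 2 * z ^ 390 - z ^ 400 - z ^ 405 + z ^ 430 + z ^ 435 + 2 * z ^ 450 + z ^ 456 + z ^ 480 + z ^ 520 + z ^ 525 + 2 * z ^ 540 + z ^ 546 - z ^ 550 - z ^ 555 - z ^ 576 + z ^ 580 + z ^ 585 + z ^ 606 + z ^ 630) * hphi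

lemma tij_iff {z : ℂ} {n : ℕ} (hz : IsPrimitiveRoot z n) (hn : n ∣ 900) :
    ∑ b ∈ tijBN, z ^ b ≠ 0 ↔ (n = 1 ∨ tijCond n) := by
  refine ⟨fun h => ?_, tij_good hz hn⟩
  by_contra hc
  have key : ∀ n ∈ Nat.divisors 900, ¬ (n = 1 ∨ tijCond n) →
      n ∈ ({4, 9, 25, 36, 100, 225, 900} : Finset ℕ) := by decide +kernel
  have h2 := key n (by simp [hn]) hc
  simp only [Finset.mem_insert, Finset.mem_singleton] at h2
  rcases h2 with rfl | rfl | rfl | rfl | rfl | rfl | rfl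
  · exact h (tij_zero4 hz)
  · exact h (tij_zero9 hz)
  · exact h (tij_zero25 hz)
  · exact h (tij_zero36 hz)
  · exact h (tij_zero100 hz)
  · exact h (tij_zero225 hz)
  · exact h (tij_zero900 hz)

lemma tij_geom (w : ℂ) (p : ℕ) (hp : 0 < p) :
    ∑ i ∈ Finset.range p, w ^ i = 0 ↔ (w ^ p = 1 ∧ w ≠ 1) := by
  constructor
  · intro h
    constructor
    · have := geom_sum_mul w p
      rw [h, zero_mul] at this
      linear_combination -this
    · rintro rfl
      simp at h
      omega
  · rintro ⟨h1, h2⟩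
    rw [geom_sum_eq h2, h1, sub_self, zero_div]

lemma tij_A {z : ℂ} {n : ℕ} (hz : IsPrimitiveRoot z n) :
    (∑ i ∈ Finset.range 5, (z ^ 36) ^ i) * ((∑ i ∈ Finset.range 3, (z ^ 100) ^ i) *
      (∑ i ∈ Finset.range 2, (z ^ 225) ^ i)) = 0 ↔ tijCond n := by
  simp only [mul_eq_zero, tij_geom _ 5 (by norm_num), tij_geom _ 3 (by norm_num),
    tij_geom _ 2 (by norm_num)]
  simp only [← pow_mul, ne_eq, hz.pow_eq_one_iff_dvd, tijCond]

lemma tij_sumB (k : ℤ) : (∑ b ∈ tijB, Complex.exp (2 * Real.pi * Complex.I * k * b / 900)) =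
    ∑ b ∈ tijBN, Complex.exp (2 * Real.pi * Complex.I * k / 900) ^ b := by
  have h : tijB = tijBN.image (fun n : ℕ => (n : ℤ)) := by decide +kernel
  rw [h, Finset.sum_image (by intro a _ b _ h; exact Int.ofNat.inj h)]
  refine Finset.sum_congr rfl fun b _ => ?_
  rw [← Complex.exp_nat_mul]
  congr 1
  push_cast
  ring

lemma tij_sumA (k : ℤ) (z : ℂ) (hz : z = Complex.exp (2 * Real.pi * Complex.I * k / 900)) :
    (∑ a ∈ tijA, Complex.exp (2 * Real.pi * Complex.I * k * a / 900)) =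
    (∑ i ∈ Finset.range 5, (z ^ 36) ^ i) * ((∑ i ∈ Finset.range 3, (z ^ 100) ^ i) *
      (∑ i ∈ Finset.range 2, (z ^ 225) ^ i)) := by
  unfold tijA
  rw [Finset.sum_image]
  · simp only [Finset.sum_product, Finset.sum_mul_sum]
    simp only [Finset.mul_sum]
    refine Finset.sum_congr rfl fun i _ => Finset.sum_congr rfl fun j _ =>
      Finset.sum_congr rfl fun l _ => ?_
    rw [hz]
    simp only [← Complex.exp_nat_mul, ← Complex.exp_add]
    congr 1
    push_cast
    ring
  · have key : ∀ p ∈ Finset.range 5 ×ˢ Finset.range 3 ×ˢ Finset.range 2,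
        ∀ q ∈ Finset.range 5 ×ˢ Finset.range 3 ×ˢ Finset.range 2,
        36 * (p.1 : ℤ) + 100 * (p.2.1 : ℤ) + 225 * (p.2.2 : ℤ) =
          36 * (q.1 : ℤ) + 100 * (q.2.1 : ℤ) + 225 * (q.2.2 : ℤ) → p = q := by
      decide +kernel
    intro p hp q hq h
    exact key p hp q hq h

lemma tij_pow (k : ℤ) (m d : ℕ) (h : d * m = 900) (hm : 0 < m) :
    Complex.exp (2 * Real.pi * Complex.I * k / 900) ^ m = 1 ↔ ((d : ℕ) : ℤ) ∣ k := by
  have hd : 0 < d := by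
    rcases Nat.eq_zero_or_pos d with rfl | h0
    · simp at h
    · exact h0
  have hdc : (d : ℂ) ≠ 0 := by exact_mod_cast hd.ne'
  have hmc : (m : ℂ) ≠ 0 := by exact_mod_cast hm.ne'
  have hpi := Complex.two_pi_I_ne_zero
  have h9 : (900 : ℂ) = d * m := by exact_mod_cast h.symm
  have e : (m : ℂ) * (2 * Real.pi * Complex.I * k / 900) =
      (k / d : ℂ) * (2 * Real.pi * Complex.I) := by
    rw [h9]; field_simp
  rw [← Complex.exp_nat_mul, Complex.exp_eq_one_iff, e]
  constructor
  · rintro ⟨j, hj⟩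
    have hj2 := mul_right_cancel₀ hpi hj
    rw [div_eq_iff hdc] at hj2
    refine ⟨j, ?_⟩
    have : (k : ℂ) = ((d * j : ℤ) : ℂ) := by rw [hj2]; push_cast; ring
    exact_mod_cast this
  · rintro ⟨j, rfl⟩
    refine ⟨j, ?_⟩
    congr 1
    push_cast
    field_simp

/-- For every integer `k`, the exponential sum `Σ_{b ∈ B} e^{2πi k b / 900}` vanishes
if and only if `900 ∤ k` and `Σ_{a ∈ A} e^{2πi k a / 900} ≠ 0`.  Equivalently, the set
of integers `k` with `Σ_{b ∈ B} e^{2πi k b / 900} ≠ 0` is exactly the union of `900ℤ`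
with the set of `k` satisfying `(5∣k ∧ 25∤k) ∨ (3∣k ∧ 9∤k) ∨ (2∣k ∧ 4∤k)`. -/
theorem stmt4 : ∀ k : ℤ,
    ((∑ b ∈ tijB, Complex.exp (2 * Real.pi * Complex.I * k * b / 900)) = 0 ↔
      (¬((900 : ℤ) ∣ k) ∧
        (∑ a ∈ tijA, Complex.exp (2 * Real.pi * Complex.I * k * a / 900)) ≠ 0)) ∧
    ((∑ b ∈ tijB, Complex.exp (2 * Real.pi * Complex.I * k * b / 900)) ≠ 0 ↔
      ((900 : ℤ) ∣ k ∨
        ((5 ∣ k ∧ ¬(25 ∣ k)) ∨ (3 ∣ k ∧ ¬(9 ∣ k)) ∨ (2 ∣ k ∧ ¬(4 ∣ k))))) := by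
  intro k
  set z : ℂ := Complex.exp (2 * Real.pi * Complex.I * k / 900) with hzdef
  have hz : IsPrimitiveRoot z (orderOf z) := IsPrimitiveRoot.orderOf z
  have hn : orderOf z ∣ 900 := by
    rw [← hz.pow_eq_one_iff_dvd, tij_pow k 900 1 (by norm_num) (by norm_num)]
    simp
  have hB := tij_iff hz hn
  have hA := tij_A hz
  have h900 : (900 : ℤ) ∣ k ↔ orderOf z = 1 := by
    rw [← Nat.dvd_one, ← hz.pow_eq_one_iff_dvd, tij_pow k 1 900 (by norm_num) (by norm_num)]
    rfl
  have hC : ((5 ∣ k ∧ ¬(25 ∣ k)) ∨ (3 ∣ k ∧ ¬(9 ∣ k)) ∨ (2 ∣ k ∧ ¬(4 ∣ k))) ↔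
      tijCond (orderOf z) := by
    simp only [tijCond, ← hz.pow_eq_one_iff_dvd]
    rw [tij_pow k 180 5 (by norm_num) (by norm_num), tij_pow k 36 25 (by norm_num) (by norm_num),
      tij_pow k 300 3 (by norm_num) (by norm_num), tij_pow k 100 9 (by norm_num) (by norm_num),
      tij_pow k 450 2 (by norm_num) (by norm_num), tij_pow k 225 4 (by norm_num) (by norm_num)]
    rfl
  rw [tij_sumB, tij_sumA k z hzdef, ← hzdef, hC, h900, Ne, hA]
  refine ⟨?_, hB⟩
  rw [← not_iff_not, ← ne_eq, hB]
  tauto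
end

section
/- For all distinct b₁, b₂ ∈ B, the difference d = b₁ − b₂ satisfies at least one of: (i) 5 divides d and 25 does not divide d; (ii) 3 divides d and 9 does not divide d; (iii) 2 divides d and 4 does not divide d. Consequently, for all distinct b₁, b₂ ∈ B one has Σ_{a ∈ A} e^{2πi (b₁ − b₂) a / 900} = 0. -/
/-- If `p ∣ d` but `p² ∤ d`, then `e^{2πi d / p²}` is a nontrivial `p`-th root of unity, so the
corresponding geometric sum vanishes. -/
lemma geom_vanish (p q : ℕ) (hp : 0 < p) (hq : q = p * p) (d : ℤ) (h1 : (p : ℤ) ∣ d)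
    (h2 : ¬ (q : ℤ) ∣ d) :
    ∑ i ∈ Finset.range p, Complex.exp (2 * Real.pi * Complex.I * d / q) ^ i = 0 := by
  have hpc : (p : ℂ) ≠ 0 := by exact_mod_cast hp.ne'
  have hqc : (q : ℂ) ≠ 0 := by rw [hq]; push_cast; exact mul_ne_zero hpc hpc
  have hne : Complex.exp (2 * Real.pi * Complex.I * d / q) ≠ 1 := by
    intro h
    obtain ⟨n, hn⟩ := Complex.exp_eq_one_iff.1 h
    apply h2
    refine ⟨n, ?_⟩
    have hpi := Complex.two_pi_I_ne_zero
    rw [div_eq_iff hqc] at hn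
    have h3 : (2 * Real.pi * Complex.I) * (d : ℂ) = (2 * Real.pi * Complex.I) * (q * n) := by
      rw [hn]; ring
    exact_mod_cast mul_left_cancel₀ hpi h3
  have hpow : Complex.exp (2 * Real.pi * Complex.I * d / q) ^ p = 1 := by
    obtain ⟨k, hk⟩ := h1
    rw [← Complex.exp_nat_mul, Complex.exp_eq_one_iff]
    refine ⟨k, ?_⟩
    rw [hk, hq]
    push_cast
    field_simp
  rw [geom_sum_eq hne, hpow, sub_self, zero_div]

/-- The exponential sum over `A` factors as a product of three geometric sums. -/
lemma sum_factor (d : ℤ) :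
    ∑ a ∈ tijA, Complex.exp (2 * Real.pi * Complex.I * d * a / 900) =
      (∑ i ∈ Finset.range 5, Complex.exp (2 * Real.pi * Complex.I * d / (25 : ℕ)) ^ i) *
      ((∑ j ∈ Finset.range 3, Complex.exp (2 * Real.pi * Complex.I * d / (9 : ℕ)) ^ j) *
      (∑ k ∈ Finset.range 2, Complex.exp (2 * Real.pi * Complex.I * d / (4 : ℕ)) ^ k)) := by
  rw [tijA, Finset.sum_image, Finset.sum_product, Finset.sum_mul]
  · refine Finset.sum_congr rfl fun i _ => ?_
    rw [Finset.sum_product, Finset.sum_mul, Finset.mul_sum]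
    refine Finset.sum_congr rfl fun j _ => ?_
    rw [Finset.mul_sum, Finset.mul_sum]
    refine Finset.sum_congr rfl fun k _ => ?_
    rw [← Complex.exp_nat_mul, ← Complex.exp_nat_mul, ← Complex.exp_nat_mul,
      ← Complex.exp_add, ← Complex.exp_add]
    congr 1
    push_cast
    ring
  · rintro ⟨i, j, k⟩ h ⟨i', j', k'⟩ h' e
    simp only [Finset.coe_product, Set.mem_prod, Finset.mem_coe, Finset.mem_range] at h h' e
    simp only [Prod.mk.injEq]
    omega

lemma diff_cond : ∀ b₁ ∈ tijB, ∀ b₂ ∈ tijB, b₁ ≠ b₂ →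
    ((5 ∣ b₁ - b₂ ∧ ¬(25 ∣ b₁ - b₂)) ∨ (3 ∣ b₁ - b₂ ∧ ¬(9 ∣ b₁ - b₂)) ∨
      (2 ∣ b₁ - b₂ ∧ ¬(4 ∣ b₁ - b₂))) := by
  decide +kernel

/-- For all distinct `b₁, b₂ ∈ B`, the difference `d = b₁ - b₂` satisfies at least one of:
(i) `5 ∣ d` and `25 ∤ d`; (ii) `3 ∣ d` and `9 ∤ d`; (iii) `2 ∣ d` and `4 ∤ d`.
Consequently `Σ_{a ∈ A} e^{2πi (b₁ - b₂) a / 900} = 0`. -/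
theorem stmt5 : ∀ b₁ ∈ tijB, ∀ b₂ ∈ tijB, b₁ ≠ b₂ →
    ((5 ∣ b₁ - b₂ ∧ ¬(25 ∣ b₁ - b₂)) ∨ (3 ∣ b₁ - b₂ ∧ ¬(9 ∣ b₁ - b₂)) ∨
      (2 ∣ b₁ - b₂ ∧ ¬(4 ∣ b₁ - b₂))) ∧
    (∑ a ∈ tijA, Complex.exp (2 * Real.pi * Complex.I * (b₁ - b₂) * a / 900)) = 0 := by
  intro b₁ h₁ b₂ h₂ hne
  have hc := diff_cond b₁ h₁ b₂ h₂ hne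
  refine ⟨hc, ?_⟩
  have hf := sum_factor (b₁ - b₂)
  rw [Int.cast_sub] at hf
  rw [hf, ← Int.cast_sub]
  rcases hc with ⟨h, h'⟩ | ⟨h, h'⟩ | ⟨h, h'⟩
  · rw [geom_vanish 5 25 (by norm_num) (by norm_num) _ h h']; simp
  · rw [geom_vanish 3 9 (by norm_num) (by norm_num) _ h h']; simp
  · rw [geom_vanish 2 4 (by norm_num) (by norm_num) _ h h']; simp
end

section
/- Let N₁, …, N_n be positive integers and let 𝒜, ℬ ⊆ (1/N₁)ℤ × ⋯ × (1/N_n)ℤ be finite sets whose reductions modulo ℤⁿ give a factorization 𝒜̄ ⊕ ℬ̄ = ((1/N₁)ℤ/ℤ) × ⋯ × ((1/N_n)ℤ/ℤ). Then the set Ω = [0, 1/N₁] × ⋯ × [0, 1/N_n] + ℬ + 𝒜 is a fundamental domain for ℝⁿ/ℤⁿ; that is, Ω tiles ℝⁿ by the translation set ℤⁿ: the translates Ω + t, t ∈ ℤⁿ, cover ℝⁿ and any two distinct translates intersect in a Lebesgue-null set. -/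
open MeasureTheory

lemma floor_aux (N : ℕ) (hN : 0 < N) (x c u : ℝ) (hu : ∃ m : ℤ, u = (m : ℝ) / (N : ℝ))
    (hc : c ∈ Set.Icc (0 : ℝ) (1 / (N : ℝ))) (hx : x = c + u)
    (hne : ∀ m : ℤ, x ≠ (m : ℝ) / (N : ℝ)) : u = (⌊(N : ℝ) * x⌋ : ℝ) / (N : ℝ) := by
  obtain ⟨k, hk⟩ := hu
  have hN' : (0 : ℝ) < N := by exact_mod_cast hN
  obtain ⟨h0, h1⟩ := hc
  have h1' : c < 1 / (N : ℝ) := by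
    refine lt_of_le_of_ne h1 fun h => hne (k + 1) ?_
    rw [hx, h, hk]; push_cast; ring
  have hfl : ⌊(N : ℝ) * x⌋ = k := by
    rw [Int.floor_eq_iff]
    have e : (N : ℝ) * x = N * c + k := by
      rw [hx, hk]; field_simp
    rw [lt_div_iff₀ hN'] at h1'
    have := mul_nonneg hN'.le h0
    constructor <;> rw [e] <;> linarith
  rw [hfl, hk]

/-- If `𝒜, ℬ ⊆ (1/N₁)ℤ × ⋯ × (1/N_n)ℤ` are finite sets whose reductions mod `ℤⁿ` give a
factorization `𝒜̄ ⊕ ℬ̄ = ((1/N₁)ℤ/ℤ) × ⋯ × ((1/N_n)ℤ/ℤ)`, then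
`Ω = [0,1/N₁] × ⋯ × [0,1/N_n] + ℬ + 𝒜` is a fundamental domain for `ℝⁿ/ℤⁿ`: the
translates `Ω + t`, `t ∈ ℤⁿ`, cover `ℝⁿ`, and distinct translates intersect in a
Lebesgue-null set. -/
theorem stmt7 (n : ℕ) (N : Fin n → ℕ) (hN : ∀ j, 0 < N j)
    (𝒜 ℬ : Finset (Fin n → ℝ))
    (h𝒜 : ∀ a ∈ 𝒜, ∀ j, ∃ m : ℤ, a j = (m : ℝ) / (N j : ℝ))
    (hℬ : ∀ b ∈ ℬ, ∀ j, ∃ m : ℤ, b j = (m : ℝ) / (N j : ℝ))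
    (hfact : ∀ x : Fin n → ℝ, (∀ j, ∃ m : ℤ, x j = (m : ℝ) / (N j : ℝ)) →
      ∃! p : (Fin n → ℝ) × (Fin n → ℝ), p.1 ∈ 𝒜 ∧ p.2 ∈ ℬ ∧
        ∀ j, ∃ m : ℤ, x j - (p.1 j + p.2 j) = (m : ℝ))
    (Ω : Set (Fin n → ℝ))
    (hΩ : Ω = {x : Fin n → ℝ | ∃ b ∈ ℬ, ∃ a ∈ 𝒜, ∃ c : Fin n → ℝ,
      (∀ j, c j ∈ Set.Icc (0 : ℝ) (1 / (N j : ℝ))) ∧ x = c + b + a}) :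
    (⋃ t : Fin n → ℤ, (fun x => x + fun j => (t j : ℝ)) '' Ω) = Set.univ ∧
    ∀ t t' : Fin n → ℤ, t ≠ t' →
      volume (((fun x => x + fun j => (t j : ℝ)) '' Ω) ∩
        ((fun x => x + fun j => (t' j : ℝ)) '' Ω)) = 0 := by
  subst hΩ
  have hN' : ∀ j, (0 : ℝ) < N j := fun j => by exact_mod_cast hN j
  constructor
  · refine Set.eq_univ_of_forall fun x => ?_
    obtain ⟨⟨a, b⟩, ⟨ha, hb, hm⟩, -⟩ :=
      hfact (fun j => (⌊(N j : ℝ) * x j⌋ : ℝ) / (N j : ℝ)) (fun j => ⟨_, rfl⟩)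
    choose t ht using hm
    refine Set.mem_iUnion.2 ⟨t, x - (fun j => (t j : ℝ)),
      ⟨b, hb, a, ha, fun j => x j - (⌊(N j : ℝ) * x j⌋ : ℝ) / (N j : ℝ), fun j => ?_, ?_⟩, ?_⟩
    · have h1 := Int.floor_le ((N j : ℝ) * x j)
      have h2 := Int.lt_floor_add_one ((N j : ℝ) * x j)
      have e : x j - (⌊(N j : ℝ) * x j⌋ : ℝ) / (N j : ℝ)
          = ((N j : ℝ) * x j - ⌊(N j : ℝ) * x j⌋) / N j := by
        have := (hN' j).ne'
        field_simp
      beta_reduce; rw [e]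
      constructor
      · exact div_nonneg (by linarith) (hN' j).le
      · exact div_le_div_of_nonneg_right (by linarith) (hN' j).le
    · funext j
      have := ht j
      simp only [Pi.sub_apply, Pi.add_apply] at this ⊢
      linarith
    · simp
  · intro t t' htt
    have hnull : volume (⋃ j : Fin n, ⋃ m : ℤ,
        {x : Fin n → ℝ | x j = (m : ℝ) / (N j : ℝ)}) = 0 := by
      refine measure_iUnion_null fun j => measure_iUnion_null fun m => ?_
      rw [volume_pi]
      exact Measure.pi_hyperplane _ j _
    refine measure_mono_null ?_ hnull
    rintro x ⟨⟨y, ⟨b, hb, a, ha, c, hc, rfl⟩, hy⟩, ⟨y', ⟨b', hb', a', ha', c', hc', rfl⟩, hy'⟩⟩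
    by_contra hx
    simp only [Set.mem_iUnion, Set.mem_setOf_eq, not_exists] at hx
    have lat : ∀ a ∈ 𝒜, ∀ b ∈ ℬ, ∀ (t : Fin n → ℤ) (j : Fin n),
        ∃ m : ℤ, b j + a j + t j = (m : ℝ) / (N j : ℝ) := by
      intro a ha b hb t j
      obtain ⟨p, hp⟩ := h𝒜 a ha j
      obtain ⟨q, hq⟩ := hℬ b hb j
      refine ⟨q + p + t j * N j, ?_⟩
      have := (hN' j).ne'
      rw [hp, hq]; push_cast; field_simp
    have key : ∀ j, b j + a j + t j = b' j + a' j + t' j := by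
      intro j
      rw [floor_aux (N j) (hN j) (x j) (c j) _ (lat a ha b hb t j) (hc j)
          (by rw [← hy]; simp only [Pi.add_apply]; ring) (hx j),
        floor_aux (N j) (hN j) (x j) (c' j) _ (lat a' ha' b' hb' t' j) (hc' j)
          (by rw [← hy']; simp only [Pi.add_apply]; ring) (hx j)]
    obtain ⟨_, _, huniq⟩ := hfact (fun j => b j + a j)
      (fun j => by simpa using lat a ha b hb 0 j)
    have e1 := huniq (a, b) ⟨ha, hb, fun j => ⟨0, by push_cast; ring⟩⟩
    have e2 := huniq (a', b') ⟨ha', hb', fun j => ⟨t' j - t j, by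
      have := key j
      push_cast; linarith⟩⟩
    have e := e1.trans e2.symm
    rw [Prod.mk.injEq] at e
    obtain ⟨rfl, rfl⟩ := e
    apply htt
    funext j
    have := key j
    have h : (t j : ℝ) = t' j := by linarith
    exact_mod_cast h
end

section
/- Let 𝒯_A = ℤ + (1/900)A ⊆ ℝ. Then Λ_A = 900ℤ + A is a universal spectrum for 𝒯_A: every measurable set Ω ⊆ ℝ of finite positive Lebesgue measure that tiles ℝ by the translation set 𝒯_A has Λ_A as a spectrum. -/
open MeasureTheory

/-- `Ω` tiles `ℝ` by the translation set `T`: the translates `Ω + t`, `t ∈ T`, cover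
`ℝ` up to a Lebesgue-null set, and distinct translates intersect in null sets. -/
def Tiles1 (Ω : Set ℝ) (T : Set ℝ) : Prop :=
  volume (Set.univ \ ⋃ t ∈ T, (fun x => x + t) '' Ω) = 0 ∧
  ∀ t ∈ T, ∀ t' ∈ T, t ≠ t' →
    volume (((fun x => x + t) '' Ω) ∩ ((fun x => x + t') '' Ω)) = 0

/-- `Λ` is a spectrum for `Ω ⊆ ℝ`: the exponentials `x ↦ e^{2πiλx}`, `λ ∈ Λ`, regarded
as elements of `L²` of Lebesgue measure restricted to `Ω`, are pairwise orthogonal and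
their linear span is dense. -/
def IsSpectrum1 (Ω : Set ℝ) (Λ : Set ℝ) : Prop :=
  (∀ l₁ ∈ Λ, ∀ l₂ ∈ Λ, l₁ ≠ l₂ →
    ∫ x in Ω, Complex.exp (2 * Real.pi * Complex.I * (l₁ : ℂ) * (x : ℂ)) *
      (starRingEnd ℂ) (Complex.exp (2 * Real.pi * Complex.I * (l₂ : ℂ) * (x : ℂ))) = 0) ∧
  (Submodule.span ℂ {f : Lp ℂ 2 (volume.restrict Ω) |
      ∃ l ∈ Λ, ∀ᵐ x ∂(volume.restrict Ω),
        f x = Complex.exp (2 * Real.pi * Complex.I * (l : ℂ) * (x : ℂ))}).topologicalClosure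
    = ⊤


/-- The character `t ↦ e^{2πit}`. -/
noncomputable def eC (t : ℝ) : ℂ := Complex.exp (2 * Real.pi * Complex.I * (t : ℂ))

lemma eC_add (s t : ℝ) : eC (s + t) = eC s * eC t := by
  unfold eC; rw [← Complex.exp_add]; push_cast; ring_nf

lemma eC_int (n : ℤ) : eC n = 1 := by
  unfold eC
  rw [Complex.exp_eq_one_iff]
  exact ⟨n, by push_cast; ring⟩

lemma eC_eq_one {t : ℝ} (h : eC t = 1) : ∃ n : ℤ, t = n := by
  unfold eC at h
  rw [Complex.exp_eq_one_iff] at h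
  obtain ⟨n, hn⟩ := h
  refine ⟨n, ?_⟩
  have h2 : (2 * Real.pi * Complex.I : ℂ) ≠ 0 := by
    simp [Real.pi_ne_zero]
  have : (t : ℂ) = n := by
    apply mul_left_cancel₀ h2
    rw [hn]; ring
  exact_mod_cast this

lemma eC_norm (t : ℝ) : ‖eC t‖ = 1 := by
  unfold eC
  have : (2 * Real.pi * Complex.I * (t : ℂ)) = ((2 * Real.pi * t : ℝ) : ℂ) * Complex.I := by
    push_cast; ring
  rw [this, Complex.norm_exp_ofReal_mul_I]

lemma eC_cont : Continuous eC := by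
  unfold eC; fun_prop

lemma eC_conj (t : ℝ) : (starRingEnd ℂ) (eC t) = eC (-t) := by
  unfold eC
  rw [← Complex.exp_conj]
  simp only [map_mul, Complex.conj_ofReal, Complex.conj_I, map_ofNat]
  push_cast
  ring_nf

lemma eC_natmul (k : ℕ) (t : ℝ) : eC (k * t) = eC t ^ k := by
  unfold eC
  rw [← Complex.exp_nat_mul]; push_cast; ring_nf

lemma eC_zero : eC 0 = 1 := by simp [eC]

lemma integrable_mul_eC {μ : Measure ℝ} {h : ℝ → ℂ} (hh : Integrable h μ) (s : ℝ) :
    Integrable (fun x => h x * eC (s * x)) μ := by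
  refine hh.mul_bdd (c := 1) ?_ ?_
  · exact (eC_cont.comp (continuous_const.mul continuous_id)).aestronglyMeasurable
  · exact Filter.Eventually.of_forall fun x => (eC_norm _).le

/-- Periodization. -/
noncomputable def per (h : ℝ → ℂ) (x : ℝ) : ℂ := ∑' n : ℤ, h (x + n)

lemma per_periodic (h : ℝ → ℂ) (x : ℝ) (m : ℤ) : per h (x + m) = per h x := by
  unfold per
  rw [← (Equiv.addLeft m).tsum_eq (fun n : ℤ => h (x + n))]
  simp [add_assoc]

lemma unfold_hasSum {h : ℝ → ℂ} (hh : Integrable h) :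
    HasSum (fun n : ℤ => ∫ x in Set.Ioc (0:ℝ) 1, h (x + n)) (∫ x, h x) := by
  have H := hasSum_integral_iUnion (μ := volume) (f := h) (s := fun n : ℤ => Set.Ioc (n : ℝ) (n + 1))
    (fun n => measurableSet_Ioc) (Set.pairwise_disjoint_Ioc_intCast ℝ)
    hh.integrableOn
  rw [iUnion_Ioc_intCast, setIntegral_univ] at H
  have e : (fun n : ℤ => ∫ x in Set.Ioc (0:ℝ) 1, h (x + n)) =
      fun n : ℤ => ∫ x in Set.Ioc (n : ℝ) (n + 1), h x := by
    funext n
    have := (measurePreserving_add_right (volume : Measure ℝ) (n : ℝ)).setIntegral_preimage_emb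
      (measurableEmbedding_addRight (n : ℝ)) h (Set.Ioc (n : ℝ) (n + 1))
    rw [← this]
    congr 2
    ext x; simp
  rw [e]
  exact H

lemma summ_norm {h : ℝ → ℂ} (hh : Integrable h) :
    Summable (fun n : ℤ => ∫ x in Set.Ioc (0:ℝ) 1, ‖h (x + n)‖) := by
  have := (unfold_hasSum hh.norm.ofReal).summable
  have h2 := this.norm
  refine h2.congr fun n => ?_
  rw [integral_ofReal]
  erw [Complex.norm_real]
  exact Real.norm_of_nonneg (integral_nonneg fun x => norm_nonneg _)

lemma per_integral {h : ℝ → ℂ} (hh : Integrable h) :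
    ∫ x in Set.Ioc (0:ℝ) 1, per h x = ∫ x, h x := by
  have h1 := hasSum_integral_of_summable_integral_norm (μ := volume.restrict (Set.Ioc (0:ℝ) 1))
    (F := fun (n : ℤ) x => h (x + n)) (fun n => (hh.comp_add_right (n : ℝ)).integrableOn) (summ_norm hh)
  exact h1.unique (unfold_hasSum hh)

lemma per_integrable {h : ℝ → ℂ} (hh : Integrable h) :
    IntegrableOn (per h) (Set.Ioc (0:ℝ) 1) := by
  refine ⟨(AEMeasurable.tsum fun n : ℤ => 
    (hh.comp_add_right (n : ℝ)).integrableOn.aestronglyMeasurable.aemeasurable).aestronglyMeasurable, ?_⟩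
  have hs := summ_norm hh
  unfold HasFiniteIntegral
  calc ∫⁻ x in Set.Ioc (0:ℝ) 1, ‖per h x‖ₑ ≤ ∫⁻ x in Set.Ioc (0:ℝ) 1, ∑' n : ℤ, ‖h (x + n)‖ₑ :=
        lintegral_mono fun x => enorm_tsum_le_tsum_enorm
    _ = ∑' n : ℤ, ∫⁻ x in Set.Ioc (0:ℝ) 1, ‖h (x + n)‖ₑ := 
        lintegral_tsum fun n => (hh.comp_add_right (n : ℝ)).integrableOn.aestronglyMeasurable.enorm
    _ = ∑' n : ℤ, ENNReal.ofReal (∫ x in Set.Ioc (0:ℝ) 1, ‖h (x + n)‖) := by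
        congr 1; ext n
        rw [ofReal_integral_norm_eq_lintegral_enorm ((hh.comp_add_right (n : ℝ)).integrableOn)]
    _ = ENNReal.ofReal (∑' n : ℤ, ∫ x in Set.Ioc (0:ℝ) 1, ‖h (x + n)‖) := 
        (ENNReal.ofReal_tsum_of_nonneg (fun n => integral_nonneg fun x => norm_nonneg _) hs).symm
    _ < ⊤ := ENNReal.ofReal_lt_top

lemma per_mul (h : ℝ → ℂ) (n : ℤ) (x : ℝ) :
    per (fun x => h x * eC (n * x)) x = per h x * eC (n * x) := by
  unfold per
  rw [← tsum_mul_right]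
  congr 1; ext m
  beta_reduce
  rw [mul_add, eC_add]
  have : eC ((n:ℝ) * m) = 1 := by exact_mod_cast eC_int (n * m)
  rw [this, mul_one]

lemma per_fourier {h : ℝ → ℂ} (hh : Integrable h) (n : ℤ) :
    ∫ x in Set.Ioc (0:ℝ) 1, per h x * eC (n * x) = ∫ x, h x * eC (n * x) := by
  rw [← per_integral (integrable_mul_eC hh n)]
  simp_rw [per_mul]

lemma int_eC (n : ℤ) (hn : n ≠ 0) : ∫ x in Set.Ioc (0:ℝ) 1, eC (n * x) = 0 := by
  rw [← intervalIntegral.integral_of_le zero_le_one]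
  have : ∀ x : ℝ, eC (n * x) = Complex.exp ((2 * Real.pi * Complex.I * n) * x) := by
    intro x; unfold eC; push_cast; ring_nf
  simp_rw [this]
  rw [integral_exp_mul_complex (by simp [Real.pi_ne_zero, hn])]
  have h1 := eC_int n
  unfold eC at h1
  push_cast at h1
  simp [h1]

/-- Fourier uniqueness on `(0,1]`. -/
lemma fourier_unique {H : ℝ → ℂ} (hH : IntegrableOn H (Set.Ioc (0:ℝ) 1))
    (h0 : ∀ n : ℤ, ∫ x in Set.Ioc (0:ℝ) 1, H x * eC (n * x) = 0) :
    ∀ᵐ x, x ∈ Set.Ioo (0:ℝ) 1 → H x = 0 := by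
  have hcont : ∀ φ : C(AddCircle (1:ℝ), ℂ), ∫ x in Set.Ioc (0:ℝ) 1, H x * φ (x : AddCircle (1:ℝ)) = 0 := by
    have hint : ∀ φ : C(AddCircle (1:ℝ), ℂ), IntegrableOn (fun x : ℝ => H x * φ (x : AddCircle (1:ℝ))) (Set.Ioc (0:ℝ) 1) := by
      intro φ
      refine Integrable.mul_bdd (c := ‖φ‖) hH ?_ ?_
      · exact (φ.continuous.comp (AddCircle.continuous_mk' 1)).aestronglyMeasurable
      · exact Filter.Eventually.of_forall fun x => φ.norm_coe_le_norm _
    let L : C(AddCircle (1:ℝ), ℂ) →ₗ[ℂ] ℂ :=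
      { toFun := fun φ => ∫ x in Set.Ioc (0:ℝ) 1, H x * φ (x : AddCircle (1:ℝ))
        map_add' := fun φ ψ => by
          rw [← integral_add (hint φ) (hint ψ)]
          simp [mul_add]
        map_smul' := fun c φ => by
          simp only [ContinuousMap.coe_smul, Pi.smul_apply, smul_eq_mul, RingHom.id_apply]
          rw [← integral_const_mul]
          congr 1; ext x; ring }
    let Lc : C(AddCircle (1:ℝ), ℂ) →L[ℂ] ℂ := L.mkContinuous (∫ x in Set.Ioc (0:ℝ) 1, ‖H x‖) (by
      intro φ
      rw [← integral_mul_const]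
      refine norm_integral_le_of_norm_le (hH.norm.mul_const _) (Filter.Eventually.of_forall fun x => ?_)
      rw [norm_mul]
      gcongr
      exact φ.norm_coe_le_norm _)
    have hz : (⊤ : Submodule ℂ C(AddCircle (1:ℝ), ℂ)) ≤ LinearMap.ker (Lc : C(AddCircle (1:ℝ), ℂ) →ₗ[ℂ] ℂ) := by
      have : Fact (0 < (1:ℝ)) := ⟨one_pos⟩
      rw [← span_fourier_closure_eq_top (T := 1)]
      apply Submodule.topologicalClosure_minimal
      · rw [Submodule.span_le]
        rintro _ ⟨n, rfl⟩
        show ∫ x in Set.Ioc (0:ℝ) 1, H x * fourier n (x : AddCircle (1:ℝ)) = 0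
        rw [← h0 n]
        congr 1; ext x
        rw [fourier_coe_apply]
        unfold eC
        push_cast
        ring_nf
      · exact Lc.isClosed_ker
    intro φ
    exact hz (Submodule.mem_top (x := φ))
  apply IsOpen.ae_eq_zero_of_integral_contDiff_smul_eq_zero isOpen_Ioo
  · exact (hH.mono_set Set.Ioo_subset_Ioc_self).locallyIntegrableOn
  · intro g gd gc gs
    have : Fact (0 < (1:ℝ)) := ⟨one_pos⟩
    have hg0 : ∀ x, x ∉ Set.Ioo (0:ℝ) 1 → g x = 0 := fun x hx =>
      image_eq_zero_of_notMem_tsupport fun h => hx (gs h)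
    have hc : Continuous (AddCircle.liftIco 1 0 (fun x : ℝ => (g x : ℂ))) := by
      apply AddCircle.liftIco_zero_continuous
      · rw [hg0 0 (by simp), hg0 1 (by simp)]
      · exact (Complex.continuous_ofReal.comp gd.continuous).continuousOn
    have := hcont ⟨_, hc⟩
    have e1 : ∫ x, g x • H x = ∫ x in Set.Ioo (0:ℝ) 1, g x • H x := by
      symm
      apply setIntegral_eq_integral_of_forall_compl_eq_zero
      intro x hx
      rw [hg0 x hx, zero_smul]
    rw [e1, ← this, integral_Ioc_eq_integral_Ioo]
    apply setIntegral_congr_fun measurableSet_Ioo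
    intro x hx
    simp only [ContinuousMap.coe_mk]
    rw [AddCircle.liftIco_zero_coe_apply (Set.Ioo_subset_Ico_self hx)]
    simp [mul_comm]

lemma ae_of_periodic {P : ℝ → Prop} (hP : ∀ x (m : ℤ), P (x + m) → P x)
    (h : ∀ᵐ x, x ∈ Set.Ioo (0:ℝ) 1 → P x) : ∀ᵐ x, P x := by
  have h1 : ∀ m : ℤ, ∀ᵐ x : ℝ, x + m ∈ Set.Ioo (0:ℝ) 1 → P (x + m) := fun m =>
    (measurePreserving_add_right (volume : Measure ℝ) (m : ℝ)).quasiMeasurePreserving.ae h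
  have h2 : ∀ᵐ x : ℝ, x ∉ Set.range ((↑) : ℤ → ℝ) :=
    (Set.countable_range _).ae_notMem _
  filter_upwards [ae_all_iff.2 h1, h2] with x hx hn
  apply hP x (-⌊x⌋)
  apply hx
  push_cast
  rw [← sub_eq_add_neg]
  refine ⟨?_, ?_⟩
  · rcases (Int.fract_nonneg x).lt_or_eq with h | h
    · exact h
    · exact absurd ⟨⌊x⌋, by unfold Int.fract at h; linarith⟩ hn
  · exact Int.fract_lt_one x

lemma per_const {h : ℝ → ℂ} (hh : Integrable h)
    (h0 : ∀ n : ℤ, n ≠ 0 → ∫ x, h x * eC (n * x) = 0) :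
    ∀ᵐ x, per h x = ∫ x, h x := by
  apply ae_of_periodic
  · intro x m; rw [per_periodic]; exact id
  · have := fourier_unique (H := fun x => per h x - ∫ x, h x)
      ((per_integrable hh).sub (by simp)) (by
      intro n
      simp_rw [sub_mul]
      rw [integral_sub (integrable_mul_eC (per_integrable hh) n)
        (integrable_mul_eC (by simp) n), per_fourier hh, integral_const_mul]
      by_cases hn : n = 0
      · subst hn; simp [eC_zero]
      · rw [h0 n hn, int_eC n hn]; simp)
    filter_upwards [this] with x hx hm
    exact sub_eq_zero.1 (hx hm)

lemma fourier_of_per_const {h : ℝ → ℂ} (hh : Integrable h) (c : ℂ)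
    (hc : ∀ᵐ x, per h x = c) (n : ℤ) (hn : n ≠ 0) :
    ∫ x, h x * eC (n * x) = 0 := by
  rw [← per_fourier hh]
  have : ∫ x in Set.Ioc (0:ℝ) 1, per h x * eC (n * x) = ∫ x in Set.Ioc (0:ℝ) 1, c * eC (n * x) := by
    apply integral_congr_ae
    filter_upwards [ae_restrict_of_ae hc] with x hx
    rw [hx]
  rw [this, integral_const_mul, int_eC n hn, mul_zero]

lemma integral_of_per_const {h : ℝ → ℂ} (hh : Integrable h) (c : ℂ)
    (hc : ∀ᵐ x, per h x = c) : ∫ x, h x = c := by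
  rw [← per_integral hh]
  have : ∫ x in Set.Ioc (0:ℝ) 1, per h x = ∫ x in Set.Ioc (0:ℝ) 1, c := by
    apply integral_congr_ae
    filter_upwards [ae_restrict_of_ae hc] with x hx
    rw [hx]
  rw [this]; simp

/-- Fourier coefficients of linear combinations of translates. -/
lemma fourier_comb {ι : Type*} (s : Finset ι) (c : ι → ℂ) (t : ι → ℝ) {h : ℝ → ℂ}
    (hh : Integrable h) (r : ℝ) :
    ∫ x, (∑ j ∈ s, c j * h (x + t j)) * eC (r * x) =
      (∑ j ∈ s, c j * eC (-(r * t j))) * ∫ x, h x * eC (r * x) := by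
  simp_rw [Finset.sum_mul]
  rw [integral_finsetSum]
  · refine Finset.sum_congr rfl fun j _ => ?_
    rw [← integral_add_right_eq_self (fun x => h x * eC (r * x)) (t j), ← integral_const_mul]
    congr 1; ext x
    have : eC (r * x) = eC (-(r * t j)) * eC (r * (x + t j)) := by
      rw [← eC_add]; ring_nf
    rw [this]; ring
  · intro j _
    exact integrable_mul_eC ((hh.comp_add_right (t j)).const_mul (c j)) r

lemma integrable_comb {ι : Type*} (s : Finset ι) (c : ι → ℂ) (t : ι → ℝ) {h : ℝ → ℂ}
    (hh : Integrable h) : Integrable (fun x => ∑ j ∈ s, c j * h (x + t j)) :=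
  integrable_finsetSum _ fun j _ => (hh.comp_add_right (t j)).const_mul (c j)

/-! ### Arithmetic of the mask polynomial -/

lemma geom_zero_imp {p : ℕ} (hp : p.Prime) {z : ℂ} (h : ∑ i ∈ Finset.range p, z ^ i = 0) :
    z ^ p = 1 ∧ z ≠ 1 := by
  constructor
  · have := geom_sum_mul z p
    rw [h, zero_mul] at this
    exact (sub_eq_zero.1 this.symm)
  · rintro rfl
    simp at h
    exact hp.ne_zero h

lemma geom_zero_of {p : ℕ} {z : ℂ} (h1 : z ^ p = 1) (h2 : z ≠ 1) :
    ∑ i ∈ Finset.range p, z ^ i = 0 := by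
  have := geom_sum_mul z p
  rw [h1, sub_self] at this
  exact (mul_eq_zero.1 this).resolve_right (sub_ne_zero.2 h2)

lemma geom_zero_pow {p u : ℕ} (hp : p.Prime) (hu : ¬ p ∣ u) {z : ℂ}
    (h : ∑ i ∈ Finset.range p, z ^ i = 0) : ∑ i ∈ Finset.range p, (z ^ u) ^ i = 0 := by
  obtain ⟨h1, h2⟩ := geom_zero_imp hp h
  have : Fact p.Prime := ⟨hp⟩
  apply geom_zero_of
  · rw [← pow_mul, mul_comm, pow_mul, h1, one_pow]
  · intro h3
    apply hu
    rw [← orderOf_eq_prime h1 h2]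
    exact orderOf_dvd_of_pow_eq_one h3

lemma geom_eC_zero_imp {p : ℕ} (hp : p.Prime) {n : ℤ}
    (h : ∑ i ∈ Finset.range p, eC ((n : ℝ) / (p * p : ℕ)) ^ i = 0) :
    (p : ℤ) ∣ n ∧ ¬ ((p * p : ℕ) : ℤ) ∣ n := by
  obtain ⟨h1, h2⟩ := geom_zero_imp hp h
  have hp0 : (p : ℝ) ≠ 0 := by exact_mod_cast hp.ne_zero
  constructor
  · rw [← eC_natmul] at h1
    obtain ⟨m, hm⟩ := eC_eq_one h1
    refine ⟨m, ?_⟩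
    push_cast at hm
    field_simp at hm
    exact_mod_cast hm
  · rintro ⟨m, rfl⟩
    apply h2
    rw [← eC_int m]
    congr 1
    push_cast
    field_simp

lemma geom_eC_zero_of {p : ℕ} (hp : p.Prime) {n : ℤ}
    (h1 : (p : ℤ) ∣ n) (h2 : ¬ ((p * p : ℕ) : ℤ) ∣ n) :
    ∑ i ∈ Finset.range p, eC ((n : ℝ) / (p * p : ℕ)) ^ i = 0 := by
  have hp0 : (p : ℝ) ≠ 0 := by exact_mod_cast hp.ne_zero
  apply geom_zero_of
  · rw [← eC_natmul]
    obtain ⟨m, rfl⟩ := h1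
    rw [← eC_int m]
    congr 1
    push_cast
    field_simp
  · intro h
    obtain ⟨m, hm⟩ := eC_eq_one h
    apply h2
    refine ⟨m, ?_⟩
    push_cast at hm
    field_simp at hm
    have : (n : ℝ) = p * p * m := by rw [hm]; ring
    exact_mod_cast this

/-- Index set of `A`. -/
def idx : Finset (ℕ × ℕ × ℕ) := Finset.range 5 ×ˢ Finset.range 3 ×ˢ Finset.range 2

/-- The elements of the twisted versions of `A`. -/
def aV (u v w : ℕ) (p : ℕ × ℕ × ℕ) : ℤ := 36 * (u * p.1) + 100 * (v * p.2.1) + 225 * (w * p.2.2)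

lemma mem_idx (p : ℕ × ℕ × ℕ) : p ∈ idx ↔ p.1 < 5 ∧ p.2.1 < 3 ∧ p.2.2 < 2 := by
  simp [idx]

lemma mem_tijA_s10 (a : ℤ) : a ∈ tijA ↔ ∃ p ∈ idx, a = aV 1 1 1 p := by
  unfold tijA idx aV
  rw [Finset.mem_image]
  simp [eq_comm]

/-- The mask `∑ e(n a / 900)`. -/
noncomputable def mask (u v w : ℕ) (n : ℤ) : ℂ := ∑ p ∈ idx, eC (n * (aV u v w p / 900 : ℝ))

lemma mask_eq (u v w : ℕ) (n : ℤ) : mask u v w n =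
    (∑ i ∈ Finset.range 5, (eC ((n : ℝ) / (5 * 5 : ℕ)) ^ u) ^ i) *
    ((∑ i ∈ Finset.range 3, (eC ((n : ℝ) / (3 * 3 : ℕ)) ^ v) ^ i) *
    (∑ i ∈ Finset.range 2, (eC ((n : ℝ) / (2 * 2 : ℕ)) ^ w) ^ i)) := by
  unfold mask idx
  rw [Finset.sum_product, Finset.sum_mul]
  refine Finset.sum_congr rfl fun i _ => ?_
  rw [Finset.sum_product, Finset.sum_mul, Finset.mul_sum]
  refine Finset.sum_congr rfl fun j _ => ?_
  rw [Finset.mul_sum, Finset.mul_sum]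
  refine Finset.sum_congr rfl fun k _ => ?_
  simp only [← eC_natmul, ← eC_add]
  congr 1
  unfold aV
  push_cast
  ring

lemma mask_twist {u v w : ℕ} (hu : ¬ 5 ∣ u) (hv : ¬ 3 ∣ v) (hw : ¬ 2 ∣ w) {n : ℤ}
    (h : mask 1 1 1 n = 0) : mask u v w n = 0 := by
  rw [mask_eq] at h ⊢
  simp only [pow_one, mul_eq_zero] at h ⊢
  rcases h with h | h | h
  · exact Or.inl (geom_zero_pow (by norm_num) hu h)
  · exact Or.inr (Or.inl (geom_zero_pow (by norm_num) hv h))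
  · exact Or.inr (Or.inr (geom_zero_pow (by norm_num) hw h))

lemma mask_zero_iff (n : ℤ) : mask 1 1 1 n = 0 ↔
    ((5:ℤ) ∣ n ∧ ¬ (25:ℤ) ∣ n) ∨ ((3:ℤ) ∣ n ∧ ¬ (9:ℤ) ∣ n) ∨ ((2:ℤ) ∣ n ∧ ¬ (4:ℤ) ∣ n) := by
  rw [mask_eq]
  simp only [pow_one, mul_eq_zero]
  constructor
  · rintro (h | h | h)
    · exact Or.inl (by simpa using geom_eC_zero_imp (by norm_num) h)
    · exact Or.inr (Or.inl (by simpa using geom_eC_zero_imp (by norm_num) h))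
    · exact Or.inr (Or.inr (by simpa using geom_eC_zero_imp (by norm_num) h))
  · rintro (h | h | h)
    · exact Or.inl (geom_eC_zero_of (p := 5) (by norm_num) (by simpa using h.1) (by simpa using h.2))
    · exact Or.inr (Or.inl (geom_eC_zero_of (p := 3) (by norm_num) (by simpa using h.1) (by simpa using h.2)))
    · exact Or.inr (Or.inr (geom_eC_zero_of (p := 2) (by norm_num) (by simpa using h.1) (by simpa using h.2)))

lemma aV_inj {p q : ℕ × ℕ × ℕ} (hp : p ∈ idx) (hq : q ∈ idx) {m : ℤ}
    (h : aV 1 1 1 p - aV 1 1 1 q = 900 * m) : p = q ∧ m = 0 := by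
  obtain ⟨i, j, k⟩ := p
  obtain ⟨i', j', k'⟩ := q
  simp only [mem_idx] at hp hq
  simp only [aV] at h
  have h1 : i = i' := by omega
  have h2 : j = j' := by omega
  have h3 : k = k' := by omega
  subst h1 h2 h3
  refine ⟨rfl, by omega⟩

lemma mask_diff {p q : ℕ × ℕ × ℕ} (hp : p ∈ idx) (hq : q ∈ idx) (m : ℤ) :
    mask 1 1 1 (900 * m + (aV 1 1 1 p - aV 1 1 1 q)) ≠ 0 := by
  rw [Ne, mask_zero_iff]
  obtain ⟨i, j, k⟩ := p
  obtain ⟨i', j', k'⟩ := q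
  simp only [mem_idx] at hp hq
  simp only [aV]
  push_cast
  rintro (h | h | h)
  · have h1 : i = i' := by omega
    subst h1; omega
  · have h1 : j = j' := by omega
    subst h1; omega
  · have h1 : k = k' := by omega
    subst h1; omega

lemma dvd900 {k : ℕ} (h1 : 25 ∣ k) (h2 : 9 ∣ k) (h3 : 4 ∣ k) : 900 ∣ k := by omega

lemma dvd900' {k : ℤ} (h1 : 25 ∣ k) (h2 : 9 ∣ k) (h3 : 4 ∣ k) : 900 ∣ k := by omega

/-- Every nonzero residue where the mask does not vanish occurs in a twisted `A`. -/
lemma exists_twist (k : ℕ) (hk : ¬ 900 ∣ k) (h : mask 1 1 1 (-(k:ℤ)) ≠ 0) :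
    ∃ u v w : ℕ, ¬ 5 ∣ u ∧ ¬ 3 ∣ v ∧ ¬ 2 ∣ w ∧ ∃ p ∈ idx, p ≠ (0, 0, 0) ∧
      ∃ m : ℤ, (k : ℤ) = aV u v w p + 900 * m := by
  rw [Ne, mask_zero_iff] at h
  push Not at h
  obtain ⟨h5', h3', h2'⟩ := h
  have h5 : ¬ 25 ∣ k → ¬ 5 ∣ k := fun a b => a (by
    have := h5' (by rw [dvd_neg]; exact_mod_cast b)
    rw [dvd_neg] at this; exact_mod_cast this)
  have h3 : ¬ 9 ∣ k → ¬ 3 ∣ k := fun a b => a (by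
    have := h3' (by rw [dvd_neg]; exact_mod_cast b)
    rw [dvd_neg] at this; exact_mod_cast this)
  have h2 : ¬ 4 ∣ k → ¬ 2 ∣ k := fun a b => a (by
    have := h2' (by rw [dvd_neg]; exact_mod_cast b)
    rw [dvd_neg] at this; exact_mod_cast this)
  clear h5' h3' h2'
  have A5 : ∃ u i : ℕ, ¬ 5 ∣ u ∧ i < 5 ∧ (25:ℤ) ∣ (k:ℤ) - 36 * (u * i) ∧ (i = 0 → 25 ∣ k) := by
    by_cases hd : 25 ∣ k
    · exact ⟨1, 0, by norm_num, by norm_num, by push_cast; omega, fun _ => hd⟩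
    · have hn := h5 hd
      clear h5 h3 h2 hk hd
      exact ⟨16 * k, 1, by omega, by norm_num, by push_cast; omega, by simp⟩
  have A3 : ∃ u i : ℕ, ¬ 3 ∣ u ∧ i < 3 ∧ (9:ℤ) ∣ (k:ℤ) - 100 * (u * i) ∧ (i = 0 → 9 ∣ k) := by
    by_cases hd : 9 ∣ k
    · exact ⟨1, 0, by norm_num, by norm_num, by push_cast; omega, fun _ => hd⟩
    · have hn := h3 hd
      clear h5 h3 h2 hk hd
      exact ⟨k, 1, hn, by norm_num, by push_cast; omega, by simp⟩
  have A2 : ∃ u i : ℕ, ¬ 2 ∣ u ∧ i < 2 ∧ (4:ℤ) ∣ (k:ℤ) - 225 * (u * i) ∧ (i = 0 → 4 ∣ k) := by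
    by_cases hd : 4 ∣ k
    · exact ⟨1, 0, by norm_num, by norm_num, by push_cast; omega, fun _ => hd⟩
    · have hn := h2 hd
      clear h5 h3 h2 hk hd
      exact ⟨k, 1, hn, by norm_num, by push_cast; omega, by simp⟩
  obtain ⟨u, i, hu, hi, h25, hi0⟩ := A5
  obtain ⟨v, j, hv, hj, h9, hj0⟩ := A3
  obtain ⟨w, l, hw, hl, h4, hl0⟩ := A2
  refine ⟨u, v, w, hu, hv, hw, (i, j, l), by simp [mem_idx, hi, hj, hl], ?_, ?_⟩
  · intro he
    simp only [Prod.mk.injEq] at he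
    exact hk (dvd900 (hi0 he.1) (hj0 he.2.1) (hl0 he.2.2))
  · simp only [aV]
    generalize (u * i : ℤ) = U at *
    generalize (v * j : ℤ) = V at *
    generalize (w * l : ℤ) = W at *
    clear hi0 hj0 hl0 h5 h3 h2 hk
    have d1 : (25:ℤ) ∣ (k:ℤ) - (36 * U + 100 * V + 225 * W) := by clear h9 h4; omega
    have d2 : (9:ℤ) ∣ (k:ℤ) - (36 * U + 100 * V + 225 * W) := by clear h25 h4 d1; omega
    have d3 : (4:ℤ) ∣ (k:ℤ) - (36 * U + 100 * V + 225 * W) := by clear h25 h9 d1 d2; omega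
    have d4 : (900:ℤ) ∣ (k:ℤ) - (36 * U + 100 * V + 225 * W) := by
      exact dvd900' d1 d2 d3
    obtain ⟨m, hm⟩ := d4
    exact ⟨m, by linarith⟩

/-! ### The tiling -/

/-- At most one integer translate of `x` lies in `Ω`. -/
def AM1 (Ω : Set ℝ) (x : ℝ) : Prop := ∀ n m : ℤ, x + n ∈ Ω → x + m ∈ Ω → n = m

lemma AM1.hasSum_mem {Ω : Set ℝ} {x : ℝ} (h : AM1 Ω x) (g : ℝ → ℂ) {n : ℤ} (hn : x + n ∈ Ω) :
    HasSum (fun n : ℤ => Ω.indicator g (x + n)) (g (x + n)) := by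
  have := hasSum_single (f := fun n : ℤ => Ω.indicator g (x + n)) n (by
    intro m hm
    exact Set.indicator_of_notMem (fun h' => hm (h m n h' hn)) _)
  simpa [Set.indicator_of_mem hn] using this

lemma hasSum_notMem {Ω : Set ℝ} {x : ℝ} (g : ℝ → ℂ) (hn : ∀ n : ℤ, x + n ∉ Ω) :
    HasSum (fun n : ℤ => Ω.indicator g (x + n)) 0 := by
  have : (fun n : ℤ => Ω.indicator g (x + n)) = fun _ => 0 := by
    funext n; exact Set.indicator_of_notMem (hn n) _
  rw [this]; exact hasSum_zero

lemma AM1.summable {Ω : Set ℝ} {x : ℝ} (h : AM1 Ω x) (g : ℝ → ℂ) :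
    Summable (fun n : ℤ => Ω.indicator g (x + n)) := by
  by_cases hn : ∃ n : ℤ, x + n ∈ Ω
  · obtain ⟨n, hn⟩ := hn
    exact (h.hasSum_mem g hn).summable
  · push Not at hn
    exact (hasSum_notMem g hn).summable

lemma AM1.per_mem {Ω : Set ℝ} {x : ℝ} (h : AM1 Ω x) (g : ℝ → ℂ) {n : ℤ} (hn : x + n ∈ Ω) :
    per (Ω.indicator g) x = g (x + n) := (h.hasSum_mem g hn).tsum_eq

lemma per_notMem {Ω : Set ℝ} {x : ℝ} (g : ℝ → ℂ) (hn : ∀ n : ℤ, x + n ∉ Ω) :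
    per (Ω.indicator g) x = 0 := (hasSum_notMem g hn).tsum_eq

lemma per_comb {Ω : Set ℝ} {x : ℝ} {ι : Type*} (s : Finset ι) (c : ι → ℂ) (t : ι → ℝ) (g : ℝ → ℂ)
    (h : ∀ j ∈ s, AM1 Ω (x + t j)) :
    per (fun x => ∑ j ∈ s, c j * Ω.indicator g (x + t j)) x =
      ∑ j ∈ s, c j * per (Ω.indicator g) (x + t j) := by
  have : HasSum (fun n : ℤ => ∑ j ∈ s, c j * Ω.indicator g (x + n + t j))
      (∑ j ∈ s, c j * per (Ω.indicator g) (x + t j)) := by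
    apply hasSum_sum
    intro j hj
    have := ((h j hj).summable g).hasSum.mul_left (c j)
    simp_rw [add_right_comm x _ (t j)]
    exact this
  exact this.tsum_eq

lemma ae_shift {P : ℝ → Prop} (h : ∀ᵐ x, P x) (s : ℝ) : ∀ᵐ x, P (x + s) :=
  (measurePreserving_add_right (volume : Measure ℝ) s).quasiMeasurePreserving.ae h

/-- Points covered exactly once. -/
def Good (Ω : Set ℝ) (x : ℝ) : Prop := ∃ n0 : ℤ, ∃ p0 ∈ idx, x + n0 + -(aV 1 1 1 p0 / 900 : ℝ) ∈ Ω ∧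
  ∀ n : ℤ, ∀ p ∈ idx, x + n + -(aV 1 1 1 p / 900 : ℝ) ∈ Ω → n = n0 ∧ p = p0

lemma ae_good {Ω : Set ℝ} (hT : Tiles1 Ω {x : ℝ | ∃ t : ℤ, ∃ a ∈ tijA, x = (t : ℝ) + (a : ℝ) / 900}) :
    ∀ᵐ x, Good Ω x := by
  set T : Set ℝ := {x : ℝ | ∃ t : ℤ, ∃ a ∈ tijA, x = (t : ℝ) + (a : ℝ) / 900} with hTdef
  obtain ⟨hc, hd⟩ := hT
  have h1 : ∀ᵐ x, ∃ t ∈ T, x - t ∈ Ω := by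
    rw [ae_iff]
    convert hc using 2
    ext x
    simp only [Set.mem_ofPred_eq, Set.mem_sdiff, Set.mem_univ, true_and, Set.mem_iUnion, Set.mem_image]
    apply not_congr
    constructor
    · rintro ⟨t, ht, hx⟩
      exact ⟨t, ht, x - t, hx, by ring⟩
    · rintro ⟨t, ht, y, hy, rfl⟩
      exact ⟨t, ht, by simpa using hy⟩
  have hmem : ∀ (n : ℤ) (p : ℕ × ℕ × ℕ), p ∈ idx → (-(n:ℝ) + (aV 1 1 1 p / 900 : ℝ)) ∈ T := by
    intro n p hp
    exact ⟨-n, aV 1 1 1 p, (mem_tijA_s10 _).2 ⟨p, hp, rfl⟩, by push_cast; ring⟩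
  have h2 : ∀ᵐ x : ℝ, ∀ (n m : ℤ) (p q : ℕ × ℕ × ℕ), p ∈ idx → q ∈ idx →
      x + n + -(aV 1 1 1 p / 900 : ℝ) ∈ Ω → x + m + -(aV 1 1 1 q / 900 : ℝ) ∈ Ω → n = m ∧ p = q := by
    simp only [ae_all_iff]
    intro n m p q hp hq
    by_cases hne : (-(n:ℝ) + (aV 1 1 1 p / 900 : ℝ)) = (-(m:ℝ) + (aV 1 1 1 q / 900 : ℝ))
    · refine Filter.Eventually.of_forall fun x _ _ => ?_
      have : ((aV 1 1 1 p : ℤ) : ℝ) - (aV 1 1 1 q : ℤ) = 900 * ((n - m : ℤ) : ℝ) := by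
        push_cast; linarith
      have := aV_inj hp hq (m := n - m) (by exact_mod_cast this)
      exact ⟨by omega, this.1⟩
    · have := hd _ (hmem n p hp) _ (hmem m q hq) hne
      have := measure_eq_zero_iff_ae_notMem.1 this
      filter_upwards [this] with x hx ha hb
      exact absurd ⟨⟨_, ha, by ring⟩, ⟨_, hb, by ring⟩⟩ hx
  filter_upwards [h1, h2] with x hx1 hx2
  obtain ⟨_, ⟨t, a, ha, rfl⟩, hx⟩ := hx1
  obtain ⟨p, hp, rfl⟩ := (mem_tijA_s10 _).1 ha
  have hx' : x + ((-t : ℤ) : ℝ) + -(aV 1 1 1 p / 900 : ℝ) ∈ Ω := by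
    convert hx using 1; push_cast; ring
  exact ⟨-t, p, hp, hx', fun n q hq hn => hx2 _ _ _ _ hq hp hn hx'⟩

lemma zero_mem_idx : ((0, 0, 0) : ℕ × ℕ × ℕ) ∈ idx := by simp [mem_idx]

lemma aV_zero (u v w : ℕ) : aV u v w (0, 0, 0) = 0 := by simp [aV]

lemma Good.am1 {Ω : Set ℝ} {x : ℝ} (h : Good Ω x) : AM1 Ω x := by
  obtain ⟨n0, p0, -, -, h⟩ := h
  have h' : ∀ n : ℤ, x + n ∈ Ω → n = n0 := fun n hn =>
    (h n _ zero_mem_idx (by simpa [aV_zero] using hn)).1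
  intro n m hn hm
  rw [h' n hn, h' m hm]

/-- The combination of translates of the indicator. -/
noncomputable def comb (Ω : Set ℝ) (u v w : ℕ) (x : ℝ) : ℂ :=
  ∑ p ∈ idx, 1 * Ω.indicator (fun _ => (1:ℂ)) (x + -(aV u v w p / 900 : ℝ))

lemma Good.per_comb_eq {Ω : Set ℝ} {x : ℝ} (h : Good Ω x) : per (comb Ω 1 1 1) x = 1 := by
  obtain ⟨n0, p0, hp0, h0, h⟩ := h
  unfold per comb
  rw [tsum_eq_single n0, Finset.sum_eq_single p0]
  · rw [Set.indicator_of_mem h0, one_mul]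
  · intro p hp hne
    rw [Set.indicator_of_notMem, mul_zero]
    exact fun h' => hne (h _ _ hp h').2
  · exact fun h' => absurd hp0 h'
  · intro n hn
    refine Finset.sum_eq_zero fun p hp => ?_
    rw [Set.indicator_of_notMem, mul_zero]
    exact fun h' => hn (h _ _ hp h').1

lemma ind_integrable {Ω : Set ℝ} (hΩ : MeasurableSet Ω) (hfin : volume Ω < ⊤) : Integrable (Ω.indicator (fun _ => (1:ℂ))) := by
  rw [integrable_indicator_iff hΩ]
  exact integrableOn_const hfin.ne

lemma comb_fourier {Ω : Set ℝ} (hΩ : MeasurableSet Ω) (hfin : volume Ω < ⊤) (u v w : ℕ) (n : ℤ) : ∫ x, comb Ω u v w x * eC (n * x) =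
    mask u v w n * ∫ x, Ω.indicator (fun _ => (1:ℂ)) x * eC (n * x) := by
  unfold comb
  rw [fourier_comb idx (fun _ => 1) (fun p => -(aV u v w p / 900 : ℝ)) (ind_integrable hΩ hfin)]
  unfold mask
  simp

lemma comb_integrable {Ω : Set ℝ} (hΩ : MeasurableSet Ω) (hfin : volume Ω < ⊤) (u v w : ℕ) : Integrable (comb Ω u v w) :=
  integrable_comb idx (fun _ => 1) (fun p => -(aV u v w p / 900 : ℝ)) (ind_integrable hΩ hfin)

lemma ind_fourier_zero {Ω : Set ℝ} (hΩ : MeasurableSet Ω) (hfin : volume Ω < ⊤) (hG : ∀ᵐ x, Good Ω x) (n : ℤ) (hn : n ≠ 0) (hm : mask 1 1 1 n ≠ 0) :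
    ∫ x, Ω.indicator (fun _ => (1:ℂ)) x * eC (n * x) = 0 := by
  have := fourier_of_per_const (comb_integrable hΩ hfin 1 1 1) 1
    (hG.mono fun x hx => hx.per_comb_eq) n hn
  rw [comb_fourier hΩ hfin] at this
  exact (mul_eq_zero.1 this).resolve_left hm

lemma ae_am1 {Ω : Set ℝ} (hG : ∀ᵐ x, Good Ω x) : ∀ᵐ x, ∀ j : ℤ, AM1 Ω (x + j / 900) := by
  rw [ae_all_iff]
  exact fun j => ae_shift (hG.mono fun x hx => hx.am1) _

lemma twist_tile {Ω : Set ℝ} (hΩ : MeasurableSet Ω) (hfin : volume Ω < ⊤) (hG : ∀ᵐ x, Good Ω x) {u v w : ℕ} (hu : ¬ 5 ∣ u) (hv : ¬ 3 ∣ v) (hw : ¬ 2 ∣ w) :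
    ∀ᵐ x, ∑ p ∈ idx, per (Ω.indicator (fun _ => (1:ℂ))) (x + -(aV u v w p / 900 : ℝ)) = 1 := by
  have h0 : ∀ n : ℤ, n ≠ 0 → ∫ x, comb Ω u v w x * eC (n * x) = 0 := by
    intro n hn
    rw [comb_fourier hΩ hfin]
    by_cases hm : mask 1 1 1 n = 0
    · rw [mask_twist hu hv hw hm, zero_mul]
    · rw [ind_fourier_zero hΩ hfin hG n hn hm, mul_zero]
  have h1 : ∫ x, comb Ω u v w x = 1 := by
    rw [← integral_of_per_const (comb_integrable hΩ hfin 1 1 1) 1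
      (hG.mono fun x hx => hx.per_comb_eq)]
    have e1 := comb_fourier hΩ hfin u v w 0
    have e2 := comb_fourier hΩ hfin 1 1 1 0
    simp only [mask, Int.cast_zero, zero_mul, eC_zero, mul_one] at e1 e2
    rw [e1, e2]
  have h2 := per_const (comb_integrable hΩ hfin u v w) h0
  rw [h1] at h2
  filter_upwards [h2, ae_am1 hG] with x hx ha
  unfold comb at hx
  rw [per_comb idx (fun _ => 1) (fun p => -(aV u v w p / 900 : ℝ))] at hx
  · simpa using hx
  · intro p _
    have := ha (-(aV u v w p))
    push_cast at this
    rwa [neg_div] at this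

/-- Differences where the mask is nonzero are excluded. -/
lemma excl {Ω : Set ℝ} (hΩ : MeasurableSet Ω) (hfin : volume Ω < ⊤) (hG : ∀ᵐ x, Good Ω x) (k : ℕ) (hk : ¬ 900 ∣ k) (h : mask 1 1 1 (-(k:ℤ)) ≠ 0) :
    ∀ᵐ x, x ∈ Ω → ∀ n : ℤ, x + k / 900 + n ∉ Ω := by
  obtain ⟨u, v, w, hu, hv, hw, p, hp, hp0, m, hm⟩ := exists_twist k hk h
  have h1 := ae_shift (twist_tile hΩ hfin hG hu hv hw) (aV u v w p / 900 : ℝ)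
  have h2 : ∀ᵐ x, ∀ j : ℤ, AM1 Ω (x + (aV u v w p / 900 : ℝ) + j / 900) :=
    ae_shift (P := fun x => ∀ j : ℤ, AM1 Ω (x + j / 900)) (ae_am1 hG) (aV u v w p / 900 : ℝ)
  filter_upwards [h1, h2] with x hx ha hxΩ n hn
  set F : ℕ × ℕ × ℕ → ℂ := fun q => per (Ω.indicator (fun _ => (1:ℂ)))
    (x + (aV u v w p / 900 : ℝ) + -(aV u v w q / 900 : ℝ)) with hF
  have ha' : ∀ q, AM1 Ω (x + (aV u v w p / 900 : ℝ) + -(aV u v w q / 900 : ℝ)) := by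
    intro q
    have := ha (-(aV u v w q))
    push_cast at this
    rwa [neg_div] at this
  have h01 : ∀ q, 0 ≤ (F q).re := by
    intro q
    by_cases hq : ∃ n : ℤ, x + (aV u v w p / 900 : ℝ) + -(aV u v w q / 900 : ℝ) + n ∈ Ω
    · obtain ⟨l, hl⟩ := hq
      simp only [hF]
      rw [(ha' q).per_mem _ hl]; simp
    · push Not at hq
      simp only [hF]
      rw [per_notMem _ hq]; simp
  have hFp : F p = 1 := by
    simp only [hF]
    rw [(ha' p).per_mem (n := 0)]
    simpa using hxΩ
  have hF0 : F (0, 0, 0) = 1 := by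
    simp only [hF]
    rw [(ha' (0, 0, 0)).per_mem (n := n + m)]
    convert hn using 1
    rw [aV_zero]
    have : (k : ℝ) = aV u v w p + 900 * m := by exact_mod_cast hm
    rw [this]; push_cast; ring
  have hs : ∑ q ∈ idx, (F q).re = 1 := by
    have := congrArg Complex.re hx
    rwa [Complex.re_sum] at this
  have hle : ∑ q ∈ {p, ((0, 0, 0) : ℕ × ℕ × ℕ)}, (F q).re ≤ ∑ q ∈ idx, (F q).re := by
    apply Finset.sum_le_sum_of_subset_of_nonneg
    · intro q hq
      simp only [Finset.mem_insert, Finset.mem_singleton] at hq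
      rcases hq with rfl | rfl
      · exact hp
      · exact zero_mem_idx
    · exact fun q _ _ => h01 q
  rw [Finset.sum_pair hp0, hs, hFp, hF0] at hle
  norm_num at hle

lemma complete {Ω : Set ℝ} (hΩ : MeasurableSet Ω) (hfin : volume Ω < ⊤) (hG : ∀ᵐ x, Good Ω x) {g : ℝ → ℂ} (hg : IntegrableOn g Ω)
    (h0 : ∀ (t : ℤ), ∀ p ∈ idx,
      ∫ x, Ω.indicator g x * eC ((-(900 * t + aV 1 1 1 p) : ℤ) * x) = 0) :
    ∀ᵐ x, x ∈ Ω → g x = 0 := by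
  have hgi : Integrable (Ω.indicator g) := hg.integrable_indicator hΩ
  have key := per_const (integrable_comb (Finset.range 900) (fun k => mask 1 1 1 (-(k:ℤ)))
    (fun k => (k / 900 : ℝ)) hgi)
  have hF : ∀ n : ℤ, ∫ x, (∑ k ∈ Finset.range 900, mask 1 1 1 (-(k:ℤ)) *
      Ω.indicator g (x + k / 900)) * eC (n * x) = 0 := by
    intro n
    rw [fourier_comb (Finset.range 900) (fun k => mask 1 1 1 (-(k:ℤ))) (fun k => (k / 900 : ℝ)) hgi]
    by_cases hn : ∃ t : ℤ, ∃ p ∈ idx, n = -(900 * t + aV 1 1 1 p)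
    · obtain ⟨t, p, hp, rfl⟩ := hn
      rw [h0 t p hp, mul_zero]
    · have : ∑ k ∈ Finset.range 900, mask 1 1 1 (-(k:ℤ)) * eC (-(n * (k / 900 : ℝ))) = 0 := by
        unfold mask
        simp_rw [Finset.sum_mul]
        rw [Finset.sum_comm]
        refine Finset.sum_eq_zero fun p hp => ?_
        have e : ∀ k : ℕ, eC ((-(k:ℤ) : ℤ) * (aV 1 1 1 p / 900 : ℝ)) * eC (-(n * (k / 900 : ℝ))) =
            eC (((-(aV 1 1 1 p + n) : ℤ) : ℝ) / 900) ^ k := by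
          intro k
          rw [← eC_add, ← eC_natmul]
          congr 1
          push_cast
          ring
        simp_rw [e]
        apply geom_zero_of
        · rw [← eC_natmul, ← eC_int (-(aV 1 1 1 p + n))]
          congr 1
          push_cast
          ring
        · intro h1
          obtain ⟨t, ht⟩ := eC_eq_one h1
          apply hn
          refine ⟨t, p, hp, ?_⟩
          have : (((-(aV 1 1 1 p + n) : ℤ) : ℝ)) = 900 * t := by linarith
          have : -(aV 1 1 1 p + n) = 900 * t := by exact_mod_cast this
          omega
      rw [this, zero_mul]
  have key := key fun n _ => hF n
  have hz := hF 0
  simp only [Int.cast_zero, zero_mul, eC_zero, mul_one] at hz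
  rw [hz] at key
  have hex : ∀ᵐ x, ∀ k : ℕ, ¬ 900 ∣ k → mask 1 1 1 (-(k:ℤ)) ≠ 0 →
      x ∈ Ω → ∀ n : ℤ, x + k / 900 + n ∉ Ω := by
    simp only [ae_all_iff]
    intro k hk hm
    simpa only [ae_all_iff] using excl hΩ hfin hG k hk hm
  filter_upwards [key, hex, ae_am1 hG] with x hx hex ha hxΩ
  rw [per_comb (Finset.range 900) (fun k : ℕ => mask 1 1 1 (-(k:ℤ))) (fun k : ℕ => (k / 900 : ℝ)) g
    (fun j _ => by simpa using ha j), Finset.sum_eq_single 0] at hx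
  · have ha0 := ha 0
    simp only [Int.cast_zero, zero_div, Nat.cast_zero, neg_zero, add_zero] at ha0 hx
    have hm : mask 1 1 1 0 ≠ 0 := by
      rw [Ne, mask_zero_iff]; norm_num
    rw [ha0.per_mem g (n := 0) (by simpa using hxΩ)] at hx
    simpa using (mul_eq_zero.1 hx).resolve_left hm
  · intro k hk hk0
    by_cases hm : mask 1 1 1 (-(k:ℤ)) = 0
    · rw [hm, zero_mul]
    · have : ¬ 900 ∣ k := fun hd => hk0 (Nat.eq_zero_of_dvd_of_lt hd (Finset.mem_range.1 hk))
      rw [per_notMem g (hex k this hm hxΩ), mul_zero]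
  · intro h; simp at h

/-- `Λ_A = 900ℤ + A` is a universal spectrum for the tiling set `𝒯_A = ℤ + (1/900)A`:
every measurable `Ω ⊆ ℝ` of finite positive measure that tiles `ℝ` by `𝒯_A` has
`Λ_A` as a spectrum. -/
theorem stmt10 :
    ∀ Ω : Set ℝ, MeasurableSet Ω → 0 < volume Ω → volume Ω < ⊤ →
      Tiles1 Ω {x : ℝ | ∃ t : ℤ, ∃ a ∈ tijA, x = (t : ℝ) + (a : ℝ) / 900} →
      IsSpectrum1 Ω {x : ℝ | ∃ t : ℤ, ∃ a ∈ tijA, x = 900 * (t : ℝ) + (a : ℝ)} := by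
  intro Ω hΩ _ hfin hT
  have hG := ae_good hT
  have hfm : IsFiniteMeasure (volume.restrict Ω) := ⟨by simpa using hfin⟩
  have heC : ∀ l x : ℝ, Complex.exp (2 * Real.pi * Complex.I * (l : ℂ) * (x : ℂ)) = eC (l * x) := by
    intro l x; unfold eC; push_cast; ring_nf
  unfold IsSpectrum1
  simp_rw [heC]
  constructor
  · rintro _ ⟨t, a, ha, rfl⟩ _ ⟨t', a', ha', rfl⟩ hne
    obtain ⟨p, hp, rfl⟩ := (mem_tijA_s10 _).1 ha
    obtain ⟨q, hq, rfl⟩ := (mem_tijA_s10 _).1 ha'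
    have hn : 900 * (t - t') + (aV 1 1 1 p - aV 1 1 1 q) ≠ 0 := by
      intro h
      apply hne
      have : 900 * t + aV 1 1 1 p = 900 * t' + aV 1 1 1 q := by linarith
      exact_mod_cast this
    rw [← ind_fourier_zero hΩ hfin hG _ hn (mask_diff hp hq _), ← integral_indicator hΩ]
    congr 1; ext x
    by_cases hx : x ∈ Ω
    · rw [Set.indicator_of_mem hx, Set.indicator_of_mem hx, eC_conj, ← eC_add, one_mul]
      congr 1; push_cast; ring
    · rw [Set.indicator_of_notMem hx, Set.indicator_of_notMem hx, zero_mul]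
  · rw [Submodule.topologicalClosure_eq_top_iff, Submodule.eq_bot_iff]
    intro g hg
    rw [Submodule.mem_orthogonal] at hg
    have hgi : IntegrableOn g Ω := (Lp.memLp g).integrable (by norm_num)
    have := complete hΩ hfin hG hgi (by
      intro t p hp
      set l : ℝ := 900 * (t : ℝ) + (aV 1 1 1 p : ℝ) with hl
      have hmem : MemLp (fun x : ℝ => eC (l * x)) 2 (volume.restrict Ω) := by
        refine MemLp.of_bound (C := 1) ?_ ?_
        · exact (eC_cont.comp (continuous_const.mul continuous_id)).aestronglyMeasurable
        · exact Filter.Eventually.of_forall fun x => (eC_norm _).le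
      have h := hg hmem.toLp (Submodule.subset_span
        ⟨l, ⟨t, _, (mem_tijA_s10 _).2 ⟨p, hp, rfl⟩, hl⟩, hmem.coeFn_toLp⟩)
      rw [L2.inner_def] at h
      rw [← h, ← integral_indicator hΩ]
      rw [integral_indicator hΩ, ← setIntegral_eq_integral_of_forall_compl_eq_zero (s := Ω)]
      · apply integral_congr_ae
        filter_upwards [hmem.coeFn_toLp, ae_restrict_mem hΩ] with x hx hxΩ
        rw [hx, Set.indicator_of_mem hxΩ]
        simp only [RCLike.inner_apply]
        rw [eC_conj]
        congr 2
        rw [hl]; push_cast; ring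
      · intro x hx
        rw [Set.indicator_of_notMem hx, zero_mul])
    rw [Lp.eq_zero_iff_ae_eq_zero]
    exact (ae_restrict_iff' hΩ).2 this
end

section
/- Let 𝒯_B = ℤ + (1/900)B ⊆ ℝ. Then Λ_B = 900ℤ + B is a universal spectrum for 𝒯_B: every measurable set Ω ⊆ ℝ of finite positive Lebesgue measure that tiles ℝ by the translation set 𝒯_B has Λ_B as a spectrum. -/
open MeasureTheory

theorem tij_w900 : (121 : ZMod 1801) ^ 900 = 1 := by decide +kernel
theorem tij_w450 : (121 : ZMod 1801) ^ (900 / 2) ≠ 1 := by decide +kernel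
theorem tij_w300 : (121 : ZMod 1801) ^ (900 / 3) ≠ 1 := by decide +kernel
theorem tij_w180 : (121 : ZMod 1801) ^ (900 / 5) ≠ 1 := by decide +kernel

open Polynomial in
theorem tij_poly_ne {ζ : ℂ} (hζ : IsPrimitiveRoot ζ 900) (P : ℤ[X])
    (hP : eval₂ (Int.castRingHom (ZMod 1801)) (121 : ZMod 1801) P ≠ 0) : aeval ζ P ≠ 0 := by
  intro h0
  apply hP
  have : Fact (Nat.Prime 1801) := ⟨by norm_num⟩
  have hint : IsIntegral ℤ ζ := hζ.isIntegral (by norm_num)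
  have hd : cyclotomic 900 ℤ ∣ P := by
    rw [cyclotomic_eq_minpoly hζ (by norm_num)]
    exact minpoly.isIntegrallyClosed_dvd hint h0
  have hw : IsPrimitiveRoot (121 : ZMod 1801) 900 := by
    have h1 : orderOf (121 : ZMod 1801) = 900 := by
      apply orderOf_eq_of_pow_and_pow_div_prime (by norm_num) tij_w900
      intro q hq hqd
      have hq' : q ∈ Nat.primeFactors 900 := by
        rw [Nat.mem_primeFactors]; exact ⟨hq, hqd, by norm_num⟩
      have e : Nat.primeFactors 900 = {2, 3, 5} := by
        rw [show 900 = 30 ^ 2 by norm_num, Nat.primeFactors_pow _ (by norm_num)]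
        decide +kernel
      rw [e] at hq'
      simp only [Finset.mem_insert, Finset.mem_singleton] at hq'
      rcases hq' with rfl | rfl | rfl
      · exact tij_w450
      · exact tij_w300
      · exact tij_w180
    rw [← h1]; exact IsPrimitiveRoot.orderOf _
  have hr := hw.isRoot_cyclotomic (by norm_num)
  obtain ⟨Q, rfl⟩ := hd
  rw [eval₂_mul]
  have : eval₂ (Int.castRingHom (ZMod 1801)) (121 : ZMod 1801) (cyclotomic 900 ℤ) = 0 := by
    rw [← eval_map, map_cyclotomic]; exact hr
  rw [this, zero_mul]

theorem tij_check : ∀ a ∈ tijB, ∀ a' ∈ tijB,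
    (∑ b ∈ tijB, (121 ^ (a + 900 - a').toNat % 1801) ^ b.toNat % 1801) % 1801 ≠ 0 := by
  decide +kernel

theorem tij_range : ∀ a ∈ tijB, 0 ≤ a ∧ a < 900 := by decide +kernel

open Polynomial in
theorem tij_hat_ne (a : ℤ) (ha : a ∈ tijB) (a' : ℤ) (ha' : a' ∈ tijB) :
    ∑ b ∈ tijB, ZMod.stdAddChar (((b * (a - a') : ℤ)) : ZMod 900) ≠ 0 := by
  set ζ : ℂ := ZMod.stdAddChar (1 : ZMod 900) with hζd
  have hζ : IsPrimitiveRoot ζ 900 := by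
    have := Complex.isPrimitiveRoot_exp 900 (by norm_num)
    have e : ζ = Complex.exp (2 * Real.pi * Complex.I / (900 : ℕ)) := by
      rw [hζd]
      have := ZMod.stdAddChar_coe (N := 900) 1
      push_cast at this ⊢
      rw [this]; congr 1; ring
    rwa [e]
  set k := (a + 900 - a').toNat with hk
  have hk' : (k : ℤ) = a + 900 - a' := by
    have h1 := tij_range a ha; have h2 := tij_range a' ha'
    omega
  have key := tij_poly_ne hζ (∑ b ∈ tijB, X ^ (k * b.toNat)) (by
    have := tij_check a ha a' ha'
    intro h
    rw [eval₂_finsetSum] at h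
    simp only [eval₂_pow, eval₂_X] at h
    apply this
    rw [← Finset.sum_nat_mod]
    have h2 : ((∑ b ∈ tijB, (121 ^ k % 1801) ^ b.toNat : ℕ) : ZMod 1801) = 0 := by
      push_cast
      rw [← h]
      apply Finset.sum_congr rfl
      intro b _
      rw [pow_mul]
      have h5 := ZMod.natCast_mod (121 ^ k) 1801
      rw [h5, Nat.cast_pow, Nat.cast_ofNat]
    rw [ZMod.natCast_eq_zero_iff] at h2
    exact Nat.mod_eq_zero_of_dvd h2)
  convert key using 1
  rw [map_sum]
  apply Finset.sum_congr rfl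
  intro b hb
  rw [map_pow, aeval_X, hζd, ← AddChar.map_nsmul_eq_pow]
  congr 1
  have h3 : ((k * b.toNat : ℕ) : ℤ) = b * (a - a') + 900 * b := by
    have h1 := tij_range b hb
    push_cast
    rw [hk', Int.toNat_of_nonneg h1.1]; ring
  rw [nsmul_one]
  have h4 : (((k * b.toNat : ℕ) : ℤ) : ZMod 900) = ((b * (a - a') + 900 * b : ℤ) : ZMod 900) := by
    rw [h3]
  rw [Int.cast_natCast] at h4
  rw [h4]
  have h900 : (900 : ZMod 900) = 0 := by decide +kernel
  push_cast
  rw [h900]; ring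

theorem tij_card : tijB.card = 30 := by decide +kernel

/-- Finite duality: if `A` complements `B` mod 900, then `B` hat vanishes on `A - A`. -/
theorem tij_dual (A : Finset (ZMod 900))
    (hA : Function.Bijective (fun p : A × tijB => (p.1 : ZMod 900) + ((p.2 : ℤ) : ZMod 900)))
    (x : ZMod 900) (hx : x ∈ A) (y : ZMod 900) (hy : y ∈ A) (hxy : x ≠ y) :
    ∑ b ∈ tijB, ZMod.stdAddChar ((b : ZMod 900) * (x - y)) = 0 := by
  classical
  set χ : AddChar (ZMod 900) ℂ := ZMod.stdAddChar with hχ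
  have hcard : A.card = 30 := by
    have := Fintype.card_of_bijective hA
    rw [Fintype.card_prod, Fintype.card_coe, Fintype.card_coe, tij_card, ZMod.card] at this
    omega
  have hprod : ∀ k : ZMod 900, k ≠ 0 →
      (∑ a : A, χ (a * k)) * (∑ b : tijB, χ (((b : ℤ) : ZMod 900) * k)) = 0 := by
    intro k hk
    rw [Finset.sum_mul_sum, ← Finset.sum_product']
    have h1 := AddChar.sum_mulShift k (ZMod.isPrimitive_stdAddChar 900)
    rw [if_neg hk] at h1
    rw [← hχ] at h1
    rw [← hA.sum_comp] at h1
    push_cast at h1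
    rw [← h1]
    apply Finset.sum_congr
    · ext; simp
    · intro p _
      rw [← AddChar.map_add_eq_mul, add_mul]
  have hinj : ∀ b ∈ tijB, ∀ b' ∈ tijB, ((b - b' : ℤ) : ZMod 900) = 0 → b = b' := by
    intro b hb b' hb' h
    rw [ZMod.intCast_zmod_eq_zero_iff_dvd] at h
    have h1 := tij_range b hb; have h2 := tij_range b' hb'
    push_cast at h
    omega
  let M : Matrix tijB A ℂ := fun b a => χ (((b : ℤ) : ZMod 900) * a)
  let M' : Matrix A tijB ℂ := fun a b => (1 / 30) * χ (-(((b : ℤ) : ZMod 900) * a))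
  have hMM : M * M' = 1 := by
    ext b b'
    rw [Matrix.mul_apply, Matrix.one_apply]
    have e : ∀ a : A, M b a * M' a b' = (1/30) * χ (a * ((b - b' : ℤ) : ZMod 900)) := by
      intro a
      simp only [M, M']
      rw [mul_left_comm, ← AddChar.map_add_eq_mul]
      congr 2; push_cast; ring
    simp_rw [e]
    rw [← Finset.mul_sum]
    split_ifs with h
    · subst h
      simp [hcard]
    · have hne : ((b - b' : ℤ) : ZMod 900) ≠ 0 := fun h0 => h (Subtype.ext (hinj _ b.2 _ b'.2 h0))
      have h1 := hprod _ hne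
      rcases mul_eq_zero.mp h1 with h2 | h2
      · rw [h2, mul_zero]
      · exfalso
        apply tij_hat_ne b b.2 b' b'.2
        rw [Finset.sum_coe_sort tijB (fun b'' => χ (((b'' : ℤ) : ZMod 900) * ((b - b' : ℤ) : ZMod 900)))] at h2
        rw [← h2]
        apply Finset.sum_congr rfl
        intro c _
        push_cast; rfl
  have e : tijB ≃ A := Fintype.equivOfCardEq (by rw [Fintype.card_coe, Fintype.card_coe, tij_card, hcard])
  have hMM' := (Matrix.mul_eq_one_comm_of_equiv e).mp hMM
  have h1 := congrFun (congrFun hMM' ⟨y, hy⟩) ⟨x, hx⟩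
  rw [Matrix.mul_apply, Matrix.one_apply_ne (by intro h; exact hxy (Subtype.ext_iff.mp h).symm)] at h1
  have e2 : ∀ b : tijB, M' ⟨y, hy⟩ b * M b ⟨x, hx⟩ = (1/30) * χ (((b : ℤ) : ZMod 900) * (x - y)) := by
    intro b
    simp only [M, M']
    rw [mul_assoc, ← AddChar.map_add_eq_mul]
    congr 2; ring
  simp_rw [e2] at h1
  rw [← Finset.mul_sum, Finset.sum_coe_sort tijB (fun b => χ (((b : ℤ) : ZMod 900) * (x - y)))] at h1
  simpa using h1

/-- the exponential `e^{2πilx}` -/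
noncomputable def tijE (l x : ℝ) : ℂ := Complex.exp (2 * Real.pi * Complex.I * (l : ℂ) * (x : ℂ))

theorem tijE_add_right (l x y : ℝ) : tijE l (x + y) = tijE l x * tijE l y := by
  unfold tijE; rw [← Complex.exp_add]; congr 1; push_cast; ring

theorem tijE_add_left (l l' x : ℝ) : tijE (l + l') x = tijE l x * tijE l' x := by
  unfold tijE; rw [← Complex.exp_add]; congr 1; push_cast; ring

theorem tijE_conj (l x : ℝ) : (starRingEnd ℂ) (tijE l x) = tijE (-l) x := by
  unfold tijE; rw [← Complex.exp_conj]; congr 1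
  simp only [map_mul, Complex.conj_ofReal, Complex.conj_I, map_ofNat]; push_cast; ring

theorem tijE_neg_right (l x : ℝ) : tijE (-l) x = tijE l (-x) := by
  unfold tijE; congr 1; push_cast; ring

theorem tijE_norm (l x : ℝ) : ‖tijE l x‖ = 1 := by
  unfold tijE
  rw [Complex.norm_exp]; simp

theorem tijE_cont (l : ℝ) : Continuous (tijE l) := by
  unfold tijE; fun_prop

theorem tijE_zero_right (l : ℝ) : tijE l 0 = 1 := by
  unfold tijE; simp

theorem tijE_int (k n : ℤ) : tijE k n = 1 := by
  unfold tijE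
  rw [Complex.exp_eq_one_iff]
  exact ⟨k * n, by push_cast; ring⟩

theorem tijE_std (k b : ℤ) : tijE k (b / 900) = ZMod.stdAddChar (((b * k : ℤ)) : ZMod 900) := by
  rw [ZMod.stdAddChar_coe]
  unfold tijE
  congr 1; push_cast; ring

/-- the integer tiling set `900ℤ + B` -/
def tijT : Set ℤ := {m | ∃ t : ℤ, ∃ a ∈ tijB, m = 900 * t + a}

theorem tij_comb (A : Set ℤ) (h : ∀ j : ℤ, ∃! m, m ∈ tijT ∧ j - m ∈ A) (n n' : ℤ)
    (hn : n ∈ A) (hn' : n' ∈ A) (hne : n ≠ n') :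
    ∑ b ∈ tijB, ZMod.stdAddChar ((b * (n - n') : ℤ) : ZMod 900) = 0 := by
  classical
  have key : ∀ n ∈ A, ∀ n' ∈ A, ∀ b ∈ tijB, ∀ b' ∈ tijB,
      (n : ZMod 900) + (b : ZMod 900) = (n' : ZMod 900) + (b' : ZMod 900) → n = n' ∧ b = b' := by
    intro n hn n' hn' b hb b' hb' he
    have h1 : ((n + b : ℤ) : ZMod 900) = ((n' + b' : ℤ) : ZMod 900) := by push_cast; exact he
    rw [ZMod.intCast_eq_intCast_iff_dvd_sub] at h1
    obtain ⟨t, ht⟩ := h1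
    push_cast at ht
    have h2 := (h (n' + b')).unique (y₁ := b') (y₂ := 900 * t + b)
      ⟨⟨0, b', hb', by ring⟩, by simpa using hn'⟩
      ⟨⟨t, b, hb, rfl⟩, by rw [show n' + b' - (900 * t + b) = n by linarith]; exact hn⟩
    have r1 := tij_range b hb
    have r2 := tij_range b' hb'
    omega
  have h0 : (0 : ℤ) ∈ tijB := by decide
  let A' : Finset (ZMod 900) := Finset.univ.filter (fun z => ∃ n ∈ A, (n : ZMod 900) = z)
  have hmem : ∀ n ∈ A, (n : ZMod 900) ∈ A' := fun n hn =>
    Finset.mem_filter.mpr ⟨Finset.mem_univ _, n, hn, rfl⟩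
  have hd := tij_dual A' (by
    constructor
    · rintro ⟨⟨z, hz⟩, ⟨b, hb⟩⟩ ⟨⟨z', hz'⟩, ⟨b', hb'⟩⟩ he
      obtain ⟨_, n, hn, rfl⟩ := Finset.mem_filter.mp hz
      obtain ⟨_, n', hn', rfl⟩ := Finset.mem_filter.mp hz'
      obtain ⟨rfl, rfl⟩ := key n hn n' hn' b hb b' hb' he
      rfl
    · intro z
      obtain ⟨j, rfl⟩ := ZMod.intCast_surjective z
      obtain ⟨m, ⟨⟨t, b, hb, rfl⟩, hA⟩, -⟩ := h j
      refine ⟨⟨⟨_, hmem _ hA⟩, ⟨b, hb⟩⟩, ?_⟩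
      have h900 : (900 : ZMod 900) = 0 := by decide +kernel
      simp only
      push_cast
      rw [h900]; ring) (n : ZMod 900) (hmem n hn) (n' : ZMod 900) (hmem n' hn')
      (fun he => hne (key n hn n' hn' 0 h0 0 h0 (by rw [he])).1)
  rw [← hd]
  apply Finset.sum_congr rfl
  intro b _
  push_cast; rfl

theorem tij_tile_ae (Ω : Set ℝ)
    (h : Tiles1 Ω {x : ℝ | ∃ t : ℤ, ∃ a ∈ tijB, x = (t : ℝ) + (a : ℝ) / 900}) :
    ∀ᵐ x : ℝ, ∀ j : ℤ, ∃! m : ℤ, m ∈ tijT ∧ x + ((j - m : ℤ) : ℝ) / 900 ∈ Ω := by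
  have hT : ∀ m ∈ tijT, ((m : ℝ) / 900) ∈
      {x : ℝ | ∃ t : ℤ, ∃ a ∈ tijB, x = (t : ℝ) + (a : ℝ) / 900} := by
    rintro m ⟨t, a, ha, rfl⟩
    exact ⟨t, a, ha, by push_cast; ring⟩
  have him : ∀ (y c : ℝ), y ∈ (fun x => x + c) '' Ω ↔ y - c ∈ Ω := by
    intro y c
    constructor
    · rintro ⟨z, hz, rfl⟩; simpa using hz
    · intro hz; exact ⟨_, hz, by simp⟩
  have h1 : ∀ᵐ x : ℝ, ∃ m : ℤ, m ∈ tijT ∧ x - (m : ℝ) / 900 ∈ Ω := by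
    have := h.1
    rw [← Set.compl_eq_univ_sdiff] at this
    filter_upwards [mem_ae_iff.mpr this] with x hx
    simp only [Set.mem_iUnion] at hx
    obtain ⟨c, ⟨t, a, ha, rfl⟩, hx⟩ := hx
    refine ⟨900 * t + a, ⟨t, a, ha, rfl⟩, ?_⟩
    rw [him] at hx
    convert hx using 1; push_cast; ring
  have h2 : ∀ᵐ x : ℝ, ∀ m ∈ tijT, ∀ m' ∈ tijT, m ≠ m' →
      ¬ (x - (m : ℝ) / 900 ∈ Ω ∧ x - (m' : ℝ) / 900 ∈ Ω) := by
    rw [ae_all_iff]; intro m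
    by_cases hm : m ∈ tijT
    swap
    · exact Filter.Eventually.of_forall fun x hm' => absurd hm' hm
    simp only [hm, true_imp_iff]
    rw [ae_all_iff]; intro m'
    by_cases hm' : m' ∈ tijT
    swap
    · exact Filter.Eventually.of_forall fun x hm'' => absurd hm'' hm'
    by_cases hne : m = m'
    · exact Filter.Eventually.of_forall fun x _ h => absurd hne h
    have h3 := h.2 _ (hT m hm) _ (hT m' hm') (by
      intro he
      apply hne
      have : (m : ℝ) = m' := by linarith
      exact_mod_cast this)
    have h4 := measure_eq_zero_iff_ae_notMem.mp h3
    filter_upwards [h4] with x hx _ _ hh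
    exact hx ⟨(him _ _).mpr hh.1, (him _ _).mpr hh.2⟩
  rw [ae_all_iff]
  intro j
  have hq := (measurePreserving_add_right (volume : Measure ℝ) ((j : ℝ) / 900)).quasiMeasurePreserving
  filter_upwards [hq.ae h1, hq.ae h2] with x hx1 hx2
  have e : ∀ m : ℤ, x + ((j - m : ℤ) : ℝ) / 900 = x + (j : ℝ) / 900 - (m : ℝ) / 900 := by
    intro m; push_cast; ring
  simp_rw [e]
  obtain ⟨m, hm, hxm⟩ := hx1
  refine ⟨m, ⟨hm, hxm⟩, ?_⟩
  rintro m' ⟨hm', hxm'⟩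
  by_contra hne
  exact hx2 m hm m' hm' (Ne.symm hne) ⟨hxm, hxm'⟩

theorem tij_dual_ae (Ω : Set ℝ)
    (h : Tiles1 Ω {x : ℝ | ∃ t : ℤ, ∃ a ∈ tijB, x = (t : ℝ) + (a : ℝ) / 900}) :
    ∀ᵐ x : ℝ, ∀ n : ℤ, x ∈ Ω → x + (n : ℝ) / 900 ∈ Ω → n ≠ 0 →
      ∑ b ∈ tijB, tijE b ((n : ℝ) / 900) = 0 := by
  filter_upwards [tij_tile_ae Ω h] with x hx n h0 hn hne
  have := tij_comb {n : ℤ | x + (n : ℝ) / 900 ∈ Ω} hx n 0 hn (by simpa using h0) hne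
  rw [← this]
  apply Finset.sum_congr rfl
  intro b _
  rw [tijE_std]; congr 2; ring

open Pointwise in
theorem tij_fund (Ω : Set ℝ) (hΩ : MeasurableSet Ω)
    (h : Tiles1 Ω {x : ℝ | ∃ t : ℤ, ∃ a ∈ tijB, x = (t : ℝ) + (a : ℝ) / 900}) :
    IsAddFundamentalDomain (AddSubgroup.zmultiples (1 : ℝ))
      (⋃ b : tijB, (fun x => x + ((b : ℤ) : ℝ) / 900) '' Ω) volume := by
  have hm : ∀ c : ℝ, MeasurableSet ((fun x => x + c) '' Ω) := fun c =>
    (MeasurableEquiv.addRight c).measurableSet_image.mpr hΩ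
  refine ⟨(MeasurableSet.iUnion fun b => hm _).nullMeasurableSet, ?_, ?_⟩
  · filter_upwards [tij_tile_ae Ω h] with x hx
    obtain ⟨m, ⟨⟨t, b, hb, rfl⟩, hA⟩, -⟩ := hx 0
    refine ⟨⟨((-t : ℤ) : ℝ), by rw [AddSubgroup.mem_zmultiples_iff]; exact ⟨-t, by simp⟩⟩, ?_⟩
    rw [Set.mem_iUnion]
    refine ⟨⟨b, hb⟩, _, hA, ?_⟩
    simp only [AddSubgroup.vadd_def, vadd_eq_add]
    push_cast; ring
  · rintro ⟨s, hs⟩ ⟨s', hs'⟩ hne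
    obtain ⟨t, rfl⟩ := AddSubgroup.mem_zmultiples_iff.mp hs
    obtain ⟨t', rfl⟩ := AddSubgroup.mem_zmultiples_iff.mp hs'
    have htt : t ≠ t' := by
      rintro rfl; exact hne rfl
    have hsub : ∀ (t : ℤ) (hs), ((⟨t • (1:ℝ), hs⟩ : AddSubgroup.zmultiples (1 : ℝ)) +ᵥ
        (⋃ b : tijB, (fun x => x + ((b : ℤ) : ℝ) / 900) '' Ω)) ⊆
        ⋃ b : tijB, (fun x => x + ((t : ℝ) + ((b : ℤ) : ℝ) / 900)) '' Ω := by
      rintro t hs _ ⟨y, hy, rfl⟩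
      obtain ⟨b, z, hz, rfl⟩ := Set.mem_iUnion.mp hy
      rw [Set.mem_iUnion]
      refine ⟨b, z, hz, ?_⟩
      simp only [AddSubgroup.vadd_def, vadd_eq_add]
      simp; ring
    refine AEDisjoint.mono (s := ⋃ b : tijB, (fun x => x + ((t : ℝ) + ((b : ℤ) : ℝ) / 900)) '' Ω)
      (t := ⋃ b : tijB, (fun x => x + ((t' : ℝ) + ((b : ℤ) : ℝ) / 900)) '' Ω) ?_
      (hsub t hs) (hsub t' hs')
    rw [AEDisjoint.iUnion_left_iff]; intro b
    rw [AEDisjoint.iUnion_right_iff]; intro b'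
    apply h.2 _ ⟨t, b, b.2, rfl⟩ _ ⟨t', b', b'.2, rfl⟩
    intro he
    have r1 := tij_range b b.2
    have r2 := tij_range b' b'.2
    have : ((900 * t + b : ℤ) : ℝ) = ((900 * t' + b' : ℤ) : ℝ) := by push_cast; linarith
    have : 900 * t + (b : ℤ) = 900 * t' + b' := by exact_mod_cast this
    omega

theorem tij_orth (Ω : Set ℝ) (hΩ : MeasurableSet Ω) (hfin : volume Ω < ⊤)
    (h : Tiles1 Ω {x : ℝ | ∃ t : ℤ, ∃ a ∈ tijB, x = (t : ℝ) + (a : ℝ) / 900})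
    (k : ℤ) (hk : k ≠ 0)
    (hB : ∑ b ∈ tijB, ZMod.stdAddChar (((b * k : ℤ)) : ZMod 900) ≠ 0) :
    ∫ x in Ω, tijE k x = 0 := by
  have hF := tij_fund Ω hΩ h
  have hm : ∀ c : ℝ, MeasurableSet ((fun x => x + c) '' Ω) := fun c =>
    (MeasurableEquiv.addRight c).measurableSet_image.mpr hΩ
  have hvol : ∀ c : ℝ, volume ((fun x => x + c) '' Ω) = volume Ω := by
    intro c; simp
  have hF2 := isAddFundamentalDomain_Ioc (zero_lt_one (α := ℝ)) 0 volume
  have e1 := hF.setIntegral_eq hF2 (f := tijE k) (by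
    rintro ⟨s, hs⟩ x
    obtain ⟨t, rfl⟩ := AddSubgroup.mem_zmultiples_iff.mp hs
    simp only [AddSubgroup.vadd_def, vadd_eq_add]
    rw [tijE_add_right, zsmul_one, tijE_int, one_mul])
  have e2 : ∫ x in Set.Ioc (0 : ℝ) (0 + 1), tijE k x = 0 := by
    rw [← intervalIntegral.integral_of_le (by norm_num)]
    unfold tijE
    have hc : (2 * Real.pi * Complex.I * ((k : ℝ) : ℂ)) ≠ 0 := by
      have : (Real.pi : ℂ) ≠ 0 := by exact_mod_cast Real.pi_ne_zero
      have : (k : ℂ) ≠ 0 := by exact_mod_cast hk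
      simp [*]
    rw [integral_exp_mul_complex hc]
    have h1 := tijE_int k 1
    unfold tijE at h1
    push_cast at h1 ⊢
    simp only [zero_add, mul_zero, Complex.exp_zero]
    push_cast
    rw [h1]; simp
  rw [e2] at e1
  have hint : ∀ s : Set ℝ, volume s < ⊤ → IntegrableOn (tijE k) s := by
    intro s hs
    have : IsFiniteMeasure (volume.restrict s) := ⟨by simpa using hs⟩
    exact Integrable.of_bound (tijE_cont k).aestronglyMeasurable 1
      (Filter.Eventually.of_forall fun x => (tijE_norm _ x).le)
  rw [integral_iUnion_ae (fun b => (hm _).nullMeasurableSet) (by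
      intro b b' hbb
      apply h.2 _ ⟨0, b, b.2, by simp⟩ _ ⟨0, b', b'.2, by simp⟩
      intro he
      apply hbb
      apply Subtype.ext
      have : (((b : ℤ)) : ℝ) = ((b' : ℤ) : ℝ) := by linarith
      exact_mod_cast this) (hint _ (by
      refine (measure_iUnion_le _).trans_lt ?_
      rw [tsum_fintype]
      simp_rw [hvol]
      exact ENNReal.sum_lt_top.mpr fun _ _ => hfin)), tsum_fintype] at e1
  have e3 : ∀ b : tijB, ∫ x in (fun x => x + ((b : ℤ) : ℝ) / 900) '' Ω, tijE k x
      = (∫ x in Ω, tijE k x) * ZMod.stdAddChar ((((b : ℤ) * k : ℤ)) : ZMod 900) := by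
    intro b
    rw [(measurePreserving_add_right volume (((b : ℤ) : ℝ) / 900)).setIntegral_image_emb
      (measurableEmbedding_addRight (((b : ℤ) : ℝ) / 900))]
    simp_rw [tijE_add_right]
    rw [integral_mul_const, tijE_std]
  simp_rw [e3] at e1
  rw [← Finset.mul_sum, Finset.sum_coe_sort tijB
    (fun b => ZMod.stdAddChar (((b * k : ℤ)) : ZMod 900))] at e1
  exact (mul_eq_zero.mp e1).resolve_right hB

theorem tij_inner {μ : Measure ℝ} (g h : ℝ → ℂ) (hg : MemLp g 2 μ) (hh : MemLp h 2 μ) :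
    inner ℂ (hg.toLp g) (hh.toLp h) = ∫ x, (starRingEnd ℂ) (g x) * h x ∂μ := by
  rw [L2.inner_def]
  apply integral_congr_ae
  filter_upwards [hg.coeFn_toLp, hh.coeFn_toLp] with x h1 h2
  rw [h1, h2, RCLike.inner_apply, mul_comm]

/-- A square integrable function orthogonal to all `T`-periodic exponentials is orthogonal to all
bounded measurable `T`-periodic functions. -/
theorem tij_periodic (T : ℝ) [Fact (0 < T)] (μ : Measure ℝ) [IsFiniteMeasure μ] (g : ℝ → ℂ)
    (hg : MemLp g 2 μ)
    (h : ∀ k : ℤ, ∫ x, (starRingEnd ℂ) (g x) * fourier k (x : AddCircle T) ∂μ = 0)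
    (φ : AddCircle T → ℂ) (hφ : Measurable φ) (C : ℝ) (hC : ∀ x, ‖φ x‖ ≤ C) :
    ∫ x, (starRingEnd ℂ) (g x) * φ (x : AddCircle T) ∂μ = 0 := by
  let q : ℝ → AddCircle T := fun x => (x : AddCircle T)
  have hqm : Measurable q := AddCircle.measurable_mk'
  let ν : Measure (AddCircle T) := μ.map q
  have hq : MeasurePreserving q μ ν := ⟨hqm, rfl⟩
  have : IsFiniteMeasure ν := by infer_instance
  let ℓ : Lp ℂ 2 ν →L[ℂ] ℂ := (innerSL ℂ (hg.toLp g)).comp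
    (Lp.compMeasurePreservingₗᵢ ℂ q hq).toContinuousLinearMap
  have hval : ∀ (ψ : AddCircle T → ℂ) (hψ : MemLp ψ 2 ν),
      ℓ (hψ.toLp ψ) = ∫ x, (starRingEnd ℂ) (g x) * ψ (x : AddCircle T) ∂μ := by
    intro ψ hψ
    exact tij_inner g (ψ ∘ q) hg (hψ.comp_measurePreserving hq)
  have hdense : (Submodule.span ℂ (Set.range (@fourier T))).topologicalClosure = ⊤ :=
    span_fourier_closure_eq_top
  have hdense2 := (ContinuousMap.toLp_denseRange ℂ ν ℂ (p := 2)
    (by norm_num)).topologicalClosure_map_submodule hdense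
  have hle : ((Submodule.span ℂ (Set.range (@fourier T))).map
      (ContinuousMap.toLp 2 ν ℂ : C(AddCircle T, ℂ) →L[ℂ] Lp ℂ 2 ν).toLinearMap) ≤
      LinearMap.ker ℓ.toLinearMap := by
    rw [Submodule.map_span_le]
    rintro _ ⟨k, rfl⟩
    rw [LinearMap.mem_ker]
    have hk : MemLp (fourier k : AddCircle T → ℂ) 2 ν :=
      MemLp.of_bound (fourier k).continuous.aestronglyMeasurable 1
        (Filter.Eventually.of_forall fun x => by
          rw [← fourier_norm (T := T) k]; exact (fourier k).norm_coe_le_norm x)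
    have := hval _ hk
    rw [h k] at this
    exact this
  have hcl := Submodule.topologicalClosure_minimal _ hle ℓ.isClosed_ker
  have hφ2 : MemLp φ 2 ν := MemLp.of_bound hφ.aestronglyMeasurable C
    (Filter.Eventually.of_forall hC)
  rw [← hval φ hφ2]
  have hmem : hφ2.toLp φ ∈ LinearMap.ker ℓ.toLinearMap := by
    apply hcl
    have : hφ2.toLp φ ∈ (⊤ : Submodule ℂ (Lp ℂ 2 ν)) := trivial
    rw [← hdense2] at this
    exact this
  exact hmem

theorem tij_complete (Ω : Set ℝ) (hΩ : MeasurableSet Ω) (hfin : volume Ω < ⊤)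
    (h : Tiles1 Ω {x : ℝ | ∃ t : ℤ, ∃ a ∈ tijB, x = (t : ℝ) + (a : ℝ) / 900})
    (f : ℝ → ℂ) (hf : MemLp f 2 (volume.restrict Ω))
    (horth : ∀ k : ℤ, ∀ b ∈ tijB,
      ∫ x in Ω, (starRingEnd ℂ) (f x) * tijE (900 * (k : ℝ) + (b : ℝ)) x = 0) :
    f =ᵐ[volume.restrict Ω] 0 := by
  have hfinμ : IsFiniteMeasure (volume.restrict Ω) := ⟨by simpa using hfin⟩
  set μ := volume.restrict Ω with hμ
  have hT : Fact ((0 : ℝ) < 1 / 900) := ⟨by norm_num⟩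
  have hdual : ∀ᵐ x ∂μ, ∀ n : ℤ, x ∈ Ω → x + (n : ℝ) / 900 ∈ Ω → n ≠ 0 →
      ∑ b ∈ tijB, tijE b ((n : ℝ) / 900) = 0 := ae_restrict_of_ae (tij_dual_ae Ω h)
  have hfint : Integrable f μ := hf.integrable (by norm_num)
  have hcint : Integrable (fun x => (starRingEnd ℂ) (f x)) μ := by
    refine hfint.congr' (RCLike.continuous_conj.comp_aestronglyMeasurable hfint.1) ?_
    exact Filter.Eventually.of_forall fun x => (RCLike.norm_conj _).symm
  -- main claim
  have key : ∀ (m : ℤ) (S : Set ℝ), MeasurableSet S →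
      ∫ x in S ∩ Set.Ioc ((m : ℝ) / 900) ((m : ℝ) / 900 + 1 / 900), (starRingEnd ℂ) (f x) ∂μ = 0 := by
    intro m S hS
    set a : ℝ := (m : ℝ) / 900 with ha
    set I := Set.Ioc a (a + 1 / 900) with hI
    let r : AddCircle (1 / 900 : ℝ) → ℝ := fun θ => (AddCircle.measurableEquivIoc (1 / 900 : ℝ) a θ : ℝ)
    have hr : Measurable r :=
      measurable_subtype_coe.comp (AddCircle.measurableEquivIoc (1 / 900 : ℝ) a).measurable
    have hrI : ∀ θ, r θ ∈ I := fun θ => (AddCircle.measurableEquivIoc (1 / 900 : ℝ) a θ).2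
    have hrq : ∀ θ, ((r θ : ℝ) : AddCircle (1 / 900 : ℝ)) = θ := fun θ =>
      (AddCircle.measurableEquivIoc (1 / 900 : ℝ) a).symm_apply_apply θ
    have hrn : ∀ x : ℝ, ∃ n : ℤ, r (x : AddCircle (1 / 900 : ℝ)) = x + (n : ℝ) / 900 := by
      intro x
      have h1 := hrq (x : AddCircle (1 / 900 : ℝ))
      have h2 := (QuotientAddGroup.eq (s := AddSubgroup.zmultiples (1 / 900 : ℝ))).mp h1.symm
      obtain ⟨n, hn⟩ := AddSubgroup.mem_zmultiples_iff.mp h2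
      refine ⟨n, ?_⟩
      rw [zsmul_eq_mul] at hn
      linarith
    have hSΩ : MeasurableSet (S ∩ Ω) := hS.inter hΩ
    let φ : ℤ → AddCircle (1 / 900 : ℝ) → ℂ := fun b θ =>
      (S ∩ Ω).indicator (fun y => tijE (-(b : ℝ)) y) (r θ)
    have hφm : ∀ b, Measurable (φ b) := fun b =>
      ((tijE_cont _).measurable.indicator hSΩ).comp hr
    have hφb : ∀ b θ, ‖φ b θ‖ ≤ 1 := by
      intro b θ
      refine (norm_indicator_le_norm_self _ _).trans (tijE_norm _ _).le
    have hz : ∀ b ∈ tijB, ∫ x, ((starRingEnd ℂ) (f x) * tijE b x) *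
        φ b (x : AddCircle (1 / 900 : ℝ)) ∂μ = 0 := by
      intro b hb
      have hgm : MemLp (fun x => f x * tijE (-(b : ℝ)) x) 2 μ := by
        refine hf.of_le (hf.1.mul (tijE_cont _).aestronglyMeasurable) ?_
        exact Filter.Eventually.of_forall fun x => by simp [tijE_norm]
      have := tij_periodic (1 / 900) μ (fun x => f x * tijE (-(b : ℝ)) x) hgm (by
        intro k
        rw [← horth k b hb]
        apply integral_congr_ae
        refine Filter.Eventually.of_forall fun x => ?_
        simp only
        rw [map_mul, tijE_conj, neg_neg, mul_assoc, add_comm, tijE_add_left, fourier_coe_apply]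
        congr 2
        unfold tijE
        congr 1
        push_cast
        field_simp) (φ b) (hφm b) 1 (hφb b)
      rw [← this]
      apply integral_congr_ae
      refine Filter.Eventually.of_forall fun x => ?_
      simp only
      rw [map_mul, tijE_conj, neg_neg]
    have hsum : ∫ x, ∑ b ∈ tijB, ((starRingEnd ℂ) (f x) * tijE b x) *
        φ b (x : AddCircle (1 / 900 : ℝ)) ∂μ = 0 := by
      rw [integral_finsetSum]
      · exact Finset.sum_eq_zero hz
      · intro b hb
        refine hcint.mono ?_ ?_
        · exact (hcint.1.mul (tijE_cont _).aestronglyMeasurable).mul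
            ((hφm b).comp AddCircle.measurable_mk').aestronglyMeasurable
        · refine Filter.Eventually.of_forall fun x => ?_
          rw [norm_mul, norm_mul, tijE_norm, mul_one]
          exact mul_le_of_le_one_right (norm_nonneg _) (hφb _ _)
    have hpt : ∀ᵐ x ∂μ, ∑ b ∈ tijB, ((starRingEnd ℂ) (f x) * tijE b x) *
        φ b (x : AddCircle (1 / 900 : ℝ)) =
        30 * (S ∩ I).indicator (fun x => (starRingEnd ℂ) (f x)) x := by
      filter_upwards [hdual, ae_restrict_mem hΩ] with x hx hxΩ
      obtain ⟨n, hn⟩ := hrn x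
      have hyI := hrI (x : AddCircle (1 / 900 : ℝ))
      rw [hn] at hyI
      simp only [φ, hn]
      have hxI : x ∈ I → n = 0 := by
        intro hxI
        have h1 := hxI.1; have h2 := hxI.2; have h3 := hyI.1; have h4 := hyI.2
        have h5 : (n : ℝ) < 1 := by linarith
        have h6 : (-1 : ℝ) < n := by linarith
        have h7 : n < 1 := by exact_mod_cast h5
        have h8 : -1 < n := by exact_mod_cast h6
        omega
      by_cases hy : x + (n : ℝ) / 900 ∈ S ∩ Ω
      · simp only [Set.indicator_of_mem hy]
        have e : ∀ b : ℤ, (starRingEnd ℂ) (f x) * tijE b x * tijE (-(b : ℝ)) (x + (n : ℝ) / 900)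
            = (starRingEnd ℂ) (f x) * (starRingEnd ℂ) (tijE b ((n : ℝ) / 900)) := by
          intro b
          rw [tijE_conj, mul_assoc, tijE_add_right, ← mul_assoc (tijE b x), ← tijE_add_left,
            add_neg_cancel]
          simp [tijE]
        simp_rw [e]
        rw [← Finset.mul_sum, ← map_sum]
        by_cases hn0 : n = 0
        · subst hn0
          have hxS : x ∈ S ∩ I := by
            refine ⟨?_, ?_⟩
            · simpa using hy.1
            · simpa using hyI
          rw [Set.indicator_of_mem hxS]
          simp only [Int.cast_zero, zero_div, tijE_zero_right, Finset.sum_const, tij_card,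
            nsmul_eq_mul, mul_one, map_natCast]
          push_cast
          ring
        · have hxS : x ∉ S ∩ I := fun hh => hn0 (hxI hh.2)
          rw [Set.indicator_of_notMem hxS, hx n hxΩ hy.2 hn0]
          simp
      · simp only [Set.indicator_of_notMem hy, mul_zero, Finset.sum_const_zero]
        have hxS : x ∉ S ∩ I := by
          intro hh
          have := hxI hh.2
          subst this
          apply hy
          simpa using ⟨hh.1, hxΩ⟩
        rw [Set.indicator_of_notMem hxS, mul_zero]
    rw [integral_congr_ae hpt, integral_const_mul, integral_indicator (hS.inter measurableSet_Ioc)]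
      at hsum
    exact (mul_eq_zero.mp hsum).resolve_left (by norm_num)
  have hm : ∀ m : ℤ, ∀ᵐ x ∂μ.restrict (Set.Ioc ((m : ℝ) / 900) ((m : ℝ) / 900 + 1 / 900)), f x = 0 := by
    intro m
    have := ae_eq_zero_of_forall_setIntegral_eq_of_sigmaFinite
      (μ := μ.restrict (Set.Ioc ((m : ℝ) / 900) ((m : ℝ) / 900 + 1 / 900)))
      (f := fun x => (starRingEnd ℂ) (f x))
      (fun s _ _ => hcint.restrict.integrableOn)
      (fun s hs _ => by
        rw [Measure.restrict_restrict hs]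
        exact key m s hs)
    filter_upwards [this] with x hx
    simpa using hx
  have hU : (⋃ m : ℤ, Set.Ioc ((m : ℝ) / 900) ((m : ℝ) / 900 + 1 / 900)) = Set.univ := by
    rw [Set.eq_univ_iff_forall]
    intro x
    rw [Set.mem_iUnion]
    refine ⟨⌈900 * x⌉ - 1, ?_, ?_⟩
    · have := Int.ceil_lt_add_one (900 * x)
      push_cast; linarith
    · have := Int.le_ceil (900 * x)
      push_cast; linarith
  have h1 := (ae_restrict_iUnion_iff (μ := μ) _ (fun x => f x = 0)).mpr hm
  rw [hU, Measure.restrict_univ] at h1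
  exact h1

/-- `Λ_B = 900ℤ + B` is a universal spectrum for the tiling set `𝒯_B = ℤ + (1/900)B`:
every measurable `Ω ⊆ ℝ` of finite positive measure that tiles `ℝ` by `𝒯_B` has
`Λ_B` as a spectrum. -/
theorem stmt11 :
    ∀ Ω : Set ℝ, MeasurableSet Ω → 0 < volume Ω → volume Ω < ⊤ →
      Tiles1 Ω {x : ℝ | ∃ t : ℤ, ∃ a ∈ tijB, x = (t : ℝ) + (a : ℝ) / 900} →
      IsSpectrum1 Ω {x : ℝ | ∃ t : ℤ, ∃ a ∈ tijB, x = 900 * (t : ℝ) + (a : ℝ)} := by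
  intro Ω hΩ _ hfin h
  have hfinμ : IsFiniteMeasure (volume.restrict Ω) := ⟨by simpa using hfin⟩
  refine ⟨?_, ?_⟩
  · rintro _ ⟨t, a, ha, rfl⟩ _ ⟨t', a', ha', rfl⟩ hne
    have h0 : 900 * t + a - (900 * t' + a') ≠ 0 := by
      intro he
      apply hne
      have : 900 * t + a = 900 * t' + a' := by linarith
      exact_mod_cast this
    have := tij_orth Ω hΩ hfin h (900 * t + a - (900 * t' + a')) h0 (by
      have h1 := tij_hat_ne a ha a' ha'
      convert h1 using 3 with b hb
      have h900 : (900 : ZMod 900) = 0 := by decide +kernel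
      push_cast
      rw [h900]; ring)
    rw [← this]
    apply integral_congr_ae
    refine Filter.Eventually.of_forall fun x => ?_
    have e := tijE_conj (900 * (t' : ℝ) + (a' : ℝ)) x
    have e2 := tijE_add_left (900 * (t : ℝ) + (a : ℝ)) (-(900 * (t' : ℝ) + (a' : ℝ))) x
    rw [← e] at e2
    simp only
    push_cast
    rw [sub_eq_add_neg, e2]
    unfold tijE
    push_cast
    rfl
  · rw [Submodule.topologicalClosure_eq_top_iff, Submodule.eq_bot_iff]
    intro f hf
    rw [Submodule.mem_orthogonal'] at hf
    have hfm := Lp.memLp f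
    have h0 := tij_complete Ω hΩ hfin h f hfm (by
      intro k b hb
      have hE : MemLp (tijE (900 * (k : ℝ) + (b : ℝ))) 2 (volume.restrict Ω) :=
        MemLp.of_bound (tijE_cont _).aestronglyMeasurable 1
          (Filter.Eventually.of_forall fun x => (tijE_norm _ x).le)
      rw [← tij_inner f _ hfm hE, Lp.toLp_coeFn]
      apply hf
      apply Submodule.subset_span
      refine ⟨_, ⟨k, b, hb, rfl⟩, ?_⟩
      filter_upwards [hE.coeFn_toLp] with x hx
      rw [hx]; rfl)
    exact (Lp.eq_zero_iff_ae_eq_zero).mpr h0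
end

section
/- Let m be a positive integer and let 𝒞 ⊆ {0, 1, …, m−1} be a nonempty set such that some measurable set of finite positive measure tiles ℝ by the translation set 𝒯 = ℤ + (1/m)𝒞. If Λ = mℤ + 𝒞 is a universal spectrum for 𝒯, then m = |𝒞|². -/
open MeasureTheory

/-- The exponential with frequency `l`. -/
noncomputable def expo (l : ℝ) (x : ℝ) : ℂ :=
  Complex.exp (2 * Real.pi * Complex.I * (l : ℂ) * (x : ℂ))

lemma expo_norm (l x : ℝ) : ‖expo l x‖ = 1 := by
  unfold expo
  rw [show (2 * Real.pi * Complex.I * (l : ℂ) * (x : ℂ)) = ((2 * Real.pi * l * x : ℝ) : ℂ) * Complex.I by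
    push_cast; ring]
  exact Complex.norm_exp_ofReal_mul_I _

lemma expo_cont (l : ℝ) : Continuous (expo l) := by
  unfold expo
  fun_prop

lemma expo_memLp (l : ℝ) (μ : Measure ℝ) [IsFiniteMeasure μ] : MemLp (expo l) 2 μ :=
  MemLp.of_bound (expo_cont l).aestronglyMeasurable 1
    (Filter.Eventually.of_forall fun x => (expo_norm l x).le)

lemma fourier_part (m : ℕ) (hm : 0 < m) (c : ℝ) (a : ℝ) (B : Set ℝ) (hB : MeasurableSet B)
    (hBa : B ⊆ Set.Ioc a (a + 1 / m)) :
    HasSum (fun t : ℤ => ‖∫ x in B, expo ((m : ℝ) * t + c) x‖ ^ 2) (1 / m * volume.real B) := by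
  have hm' : (0 : ℝ) < m := by exact_mod_cast hm
  have hab : a < a + 1 / m := by
    have : (0 : ℝ) < 1 / m := by positivity
    linarith
  have hmem : MemLp (B.indicator (expo c)) 2 (volume.restrict (Set.Ioc a (a + 1 / m))) :=
    (expo_memLp c _).indicator hB
  have h := hasSum_sq_fourierCoeffOn hab hmem
  have hint : ∫ x in a..(a + 1 / m), ‖B.indicator (expo c) x‖ ^ 2 = volume.real B := by
    rw [intervalIntegral.integral_of_le hab.le]
    have : (fun x => ‖B.indicator (expo c) x‖ ^ 2) = B.indicator (fun _ => (1 : ℝ)) := by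
      ext x
      by_cases hx : x ∈ B <;> simp [hx, expo_norm]
    rw [this, setIntegral_indicator hB, Set.inter_eq_self_of_subset_right hBa]
    simp
  have hco : ∀ t : ℤ, fourierCoeffOn hab (B.indicator (expo c)) t
      = (m : ℂ) * ∫ x in B, expo ((m : ℝ) * ((-t : ℤ) : ℝ) + c) x := by
    intro t
    rw [fourierCoeffOn_eq_integral, intervalIntegral.integral_of_le hab.le]
    have : (fun x : ℝ => fourier (-t) (x : AddCircle (a + 1 / (m : ℝ) - a)) • B.indicator (expo c) x)
        = B.indicator (fun x => expo ((m : ℝ) * ((-t : ℤ) : ℝ) + c) x) := by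
      ext x
      by_cases hx : x ∈ B
      · simp only [hx, Set.indicator_of_mem, smul_eq_mul]
        rw [fourier_coe_apply]
        unfold expo
        rw [← Complex.exp_add]
        congr 1
        have : (m : ℂ) ≠ 0 := by exact_mod_cast hm.ne'
        push_cast
        rw [add_sub_cancel_left]
        field_simp
      · simp [hx]
    rw [this, setIntegral_indicator hB, Set.inter_eq_self_of_subset_right hBa]
    simp
  rw [hint] at h
  simp only [hco, norm_mul, mul_pow, Complex.norm_natCast] at h
  have h2 := h.mul_left (((m : ℝ) ^ 2)⁻¹)
  have h3 := (Equiv.neg ℤ).hasSum_iff.mpr h2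
  have e1 : ((fun i : ℤ => ((m : ℝ) ^ 2)⁻¹ *
      ((m : ℝ) ^ 2 * ‖∫ x in B, expo ((m : ℝ) * ((-i : ℤ) : ℝ) + c) x‖ ^ 2)) ∘ ⇑(Equiv.neg ℤ))
      = fun t : ℤ => ‖∫ x in B, expo ((m : ℝ) * t + c) x‖ ^ 2 := by
    funext t
    simp only [Function.comp, Equiv.neg_apply, neg_neg]
    rw [← mul_assoc, inv_mul_cancel₀ (by positivity), one_mul]
  have e2 : ((m : ℝ) ^ 2)⁻¹ * (a + 1 / (m : ℝ) - a)⁻¹ • volume.real B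
      = 1 / m * volume.real B := by
    rw [add_sub_cancel_left, smul_eq_mul]
    field_simp
  rwa [e1, e2] at h3

lemma spectrum_part {ι : Type*} (l : ι → ℝ) (hl : Function.Injective l) (Ω : Set ℝ)
    (hΩ : MeasurableSet Ω) (hpos : 0 < volume Ω) (hfin : volume Ω < ⊤)
    (hs : IsSpectrum1 Ω (Set.range l)) (B : Set ℝ) (hB : MeasurableSet B) (hBΩ : B ⊆ Ω) :
    HasSum (fun i => ‖∫ x in B, expo (l i) x‖ ^ 2) (volume.real Ω * volume.real B) := by
  classical
  have : IsFiniteMeasure (volume.restrict Ω) := ⟨by simpa using hfin⟩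
  have hv : 0 < volume.real Ω := ENNReal.toReal_pos hpos.ne' hfin.ne
  obtain ⟨ho, hd⟩ := hs
  let e : ι → Lp ℂ 2 (volume.restrict Ω) := fun i => (expo_memLp (l i) _).toLp
  have he : ∀ i, e i =ᵐ[volume.restrict Ω] expo (l i) := fun i => MemLp.coeFn_toLp _
  have hin : ∀ i j, inner ℂ (e i) (e j) = if i = j then (volume.real Ω : ℂ) else 0 := by
    intro i j
    rw [L2.inner_def]
    have h1 : ∫ x in Ω, inner ℂ (e i x) (e j x) = ∫ x in Ω, expo (l j) x * (starRingEnd ℂ) (expo (l i) x) := by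
      apply integral_congr_ae
      filter_upwards [he i, he j] with x h1 h2
      rw [h1, h2]
      simp [RCLike.inner_apply]
    rw [h1]
    split_ifs with hij
    · subst hij
      have : ∀ x, expo (l i) x * (starRingEnd ℂ) (expo (l i) x) = 1 := by
        intro x
        rw [Complex.mul_conj, Complex.normSq_eq_norm_sq, expo_norm]; simp
      simp [this]
    · exact ho _ ⟨j, rfl⟩ _ ⟨i, rfl⟩ (fun h => hij (hl h).symm)
  let s : ℝ := Real.sqrt (volume.real Ω)
  have hs0 : 0 < s := Real.sqrt_pos.mpr hv
  have hss : s * s = volume.real Ω := Real.mul_self_sqrt hv.le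
  have hsC : (s : ℂ) ≠ 0 := by exact_mod_cast hs0.ne'
  let v : ι → Lp ℂ 2 (volume.restrict Ω) := fun i => ((s : ℂ)⁻¹) • e i
  have hvo : Orthonormal ℂ v := by
    rw [orthonormal_iff_ite]
    intro i j
    simp only [v, inner_smul_left, inner_smul_right, hin]
    split_ifs
    · rw [← hss]
      simp
      field_simp
    · simp
  have hsp : ⊤ ≤ (Submodule.span ℂ (Set.range v)).topologicalClosure := by
    rw [← hd]
    apply Submodule.topologicalClosure_mono
    rw [Submodule.span_le]
    rintro f ⟨_, ⟨i, rfl⟩, hf⟩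
    have : f = (s : ℂ) • v i := by
      have : f = e i := by
        apply Lp.ext
        filter_upwards [hf, he i] with x h1 h2
        rw [h1, h2]; rfl
      simp only [v, smul_smul]
      rw [mul_inv_cancel₀ hsC, one_smul, this]
    rw [this]
    exact Submodule.smul_mem _ _ (Submodule.subset_span ⟨i, rfl⟩)
  let b := HilbertBasis.mk hvo hsp
  have hbv : ∀ i, b i = v i := fun i => by simp [b, HilbertBasis.coe_mk]
  have hBfin : (volume.restrict Ω) B ≠ ⊤ := measure_ne_top _ _
  have hsum := b.hasSum_inner_mul_inner (indicatorConstLp 2 hB hBfin (1 : ℂ))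
    (indicatorConstLp 2 hB hBfin (1 : ℂ))
  have hBr : (volume.restrict Ω).restrict B = volume.restrict B := by
    rw [Measure.restrict_restrict hB, Set.inter_eq_self_of_subset_left hBΩ]
  have hie : ∀ i, inner ℂ (indicatorConstLp 2 hB hBfin (1 : ℂ)) (b i)
      = (s : ℂ)⁻¹ * ∫ x in B, expo (l i) x := by
    intro i
    rw [hbv]
    simp only [v, inner_smul_right]
    rw [L2.inner_indicatorConstLp_one, ← hBr]
    congr 1
    exact integral_congr_ae (ae_restrict_of_ae (he i))
  have hterm : ∀ i, inner ℂ (indicatorConstLp 2 hB hBfin (1 : ℂ)) (b i) *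
      inner ℂ (b i) (indicatorConstLp 2 hB hBfin (1 : ℂ))
      = (((volume.real Ω)⁻¹ * ‖∫ x in B, expo (l i) x‖ ^ 2 : ℝ) : ℂ) := by
    intro i
    rw [← inner_conj_symm (b i), Complex.mul_conj, hie, Complex.normSq_eq_norm_sq, norm_mul, mul_pow,
      ← hss]
    congr 2
    rw [norm_inv, Complex.norm_real, Real.norm_eq_abs, abs_of_pos hs0, inv_pow, sq]
  rw [L2.inner_indicatorConstLp_one_indicatorConstLp_one] at hsum
  simp only [hterm] at hsum
  have hr : (volume.restrict Ω).real (B ∩ B) = volume.real B := by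
    rw [Set.inter_self, measureReal_restrict_apply hB, Set.inter_eq_self_of_subset_left hBΩ]
  rw [hr] at hsum
  have h1 : HasSum (fun i => (volume.real Ω)⁻¹ * ‖∫ x in B, expo (l i) x‖ ^ 2) (volume.real B) :=
    Complex.hasSum_ofReal.mp hsum
  have h2 := h1.mul_left (volume.real Ω)
  simpa only [← mul_assoc, mul_inv_cancel₀ hv.ne', one_mul] using h2

lemma tile_part (m : ℕ) (hm : 0 < m) (C : Finset ℕ) (hC : C ⊆ Finset.range m)
    (Ω : Set ℝ) (hΩ : MeasurableSet Ω)
    (ht : Tiles1 Ω {x : ℝ | ∃ t : ℤ, ∃ c ∈ C, x = (t : ℝ) + (c : ℝ) / (m : ℝ)}) :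
    (C.card : ENNReal) * volume Ω = 1 := by
  have hm' : (0 : ℝ) < m := by exact_mod_cast hm
  obtain ⟨h1, h2⟩ := ht
  let τ : C × ℤ → ℝ := fun p => (p.2 : ℝ) + ((p.1 : ℕ) : ℝ) / m
  have hτ : Function.Injective τ := by
    rintro ⟨⟨c, hc⟩, t⟩ ⟨⟨c', hc'⟩, t'⟩ h
    simp only [τ] at h
    have hcm := Finset.mem_range.mp (hC hc)
    have hcm' := Finset.mem_range.mp (hC hc')
    field_simp at h
    have h' : (m : ℤ) * t + c = m * t' + c' := by
      have : (m : ℝ) * t + c = m * t' + c' := by linarith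
      exact_mod_cast this
    have e1 : (c : ℤ) = c' := by
      have a1 := congrArg (· % (m : ℤ)) h'
      simp only [Int.mul_add_emod_self_left] at a1
      rwa [Int.emod_eq_of_lt (by omega) (by omega), Int.emod_eq_of_lt (by omega) (by omega)] at a1
    have e2 : t = t' := by
      rw [e1] at h'
      have : (m : ℤ) * t = m * t' := by linarith
      exact mul_left_cancel₀ (by omega) this
    have e3 : c = c' := by exact_mod_cast e1
    subst e2 e3
    rfl
  have hτm : ∀ p, τ p ∈ {x : ℝ | ∃ t : ℤ, ∃ c ∈ C, x = (t : ℝ) + (c : ℝ) / (m : ℝ)} :=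
    fun p => ⟨p.2, p.1, p.1.2, rfl⟩
  let F : C × ℤ → Set ℝ := fun p => (fun x => x + τ p) '' Ω
  have hFm : ∀ p, MeasurableSet (F p) := fun p => by
    simp only [F, Set.image_add_right]
    exact (measurable_add_const _) hΩ
  have hunion : volume (Set.univ \ ⋃ p, F p) = 0 := by
    refine measure_mono_null ?_ h1
    apply Set.sdiff_subset_sdiff_right
    intro x hx
    simp only [Set.mem_iUnion] at hx ⊢
    obtain ⟨t, ⟨n, c, hc, rfl⟩, hx⟩ := hx
    exact ⟨(⟨c, hc⟩, n), hx⟩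
  have hone : volume (Set.Ico (0 : ℝ) 1) = ∑' p, volume (F p ∩ Set.Ico 0 1) := by
    rw [← measure_iUnion₀, ← Set.iUnion_inter]
    · rw [← measure_inter_add_sdiff (Set.Ico (0 : ℝ) 1) (MeasurableSet.iUnion hFm),
        measure_mono_null (Set.sdiff_subset_sdiff_left (Set.subset_univ _)) hunion, add_zero,
        Set.inter_comm]
    · intro p q hpq
      refine measure_mono_null ?_ (h2 _ (hτm p) _ (hτm q) (fun h => hpq (hτ h)))
      intro x hx
      exact ⟨hx.1.1, hx.2.1⟩
    · intro p
      exact ((hFm p).inter measurableSet_Ico).nullMeasurableSet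
  have hc : ∀ c : C, ∑' n : ℤ, volume (F (c, n) ∩ Set.Ico 0 1) = volume Ω := by
    intro c
    let r : ℝ := -(((c : ℕ) : ℝ) / m)
    have hF : ∀ n : ℤ, volume (F (c, n) ∩ Set.Ico 0 1)
        = volume (Ω ∩ Set.Ico (r + ((-n : ℤ) : ℝ)) (r + ((-n : ℤ) : ℝ) + 1)) := by
      intro n
      rw [← measure_preimage_add_right volume (τ (c, n)) (F (c, n) ∩ Set.Ico 0 1)]
      congr 1
      ext x
      simp only [F, τ, r, Set.mem_preimage, Set.mem_inter_iff, Set.mem_image, add_left_inj,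
        exists_eq_right, Set.mem_Ico]
      push_cast
      refine and_congr_right fun _ => ⟨fun h => ⟨by linarith [h.1], by linarith [h.2]⟩,
        fun h => ⟨by linarith [h.1], by linarith [h.2]⟩⟩
    simp only [hF]
    refine ((Equiv.neg ℤ).tsum_eq
      (fun n : ℤ => volume (Ω ∩ Set.Ico (r + (n : ℝ)) (r + (n : ℝ) + 1)))).trans ?_
    rw [← measure_iUnion, ← Set.inter_iUnion, iUnion_Ico_add_intCast, Set.inter_univ]
    · intro p q hpq
      exact (Set.pairwise_disjoint_Ico_add_intCast r hpq).mono Set.inter_subset_right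
        Set.inter_subset_right
    · exact fun n => hΩ.inter measurableSet_Ico
  rw [ENNReal.tsum_prod'] at hone
  simp only [hc] at hone
  simpa using hone.symm

theorem stmt12 (m : ℕ) (hm : 0 < m) (𝒞 : Finset ℕ) (h𝒞 : 𝒞.Nonempty)
    (h𝒞m : 𝒞 ⊆ Finset.range m)
    (𝒯 : Set ℝ) (h𝒯 : 𝒯 = {x : ℝ | ∃ t : ℤ, ∃ c ∈ 𝒞, x = (t : ℝ) + (c : ℝ) / (m : ℝ)})
    (Λ : Set ℝ) (hΛ : Λ = {x : ℝ | ∃ t : ℤ, ∃ c ∈ 𝒞, x = (m : ℝ) * (t : ℝ) + (c : ℝ)})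
    (hexists : ∃ Ω₀ : Set ℝ, MeasurableSet Ω₀ ∧ 0 < volume Ω₀ ∧ volume Ω₀ < ⊤ ∧
      Tiles1 Ω₀ 𝒯)
    (huniv : ∀ Ω : Set ℝ, MeasurableSet Ω → 0 < volume Ω → volume Ω < ⊤ →
      Tiles1 Ω 𝒯 → IsSpectrum1 Ω Λ) :
    m = 𝒞.card ^ 2 := by
  have hm' : (0 : ℝ) < m := by exact_mod_cast hm
  obtain ⟨Ω, hΩ, hpos, hfin, htile⟩ := hexists
  have hspec := huniv Ω hΩ hpos hfin htile
  rw [h𝒯] at htile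
  have hcard := tile_part m hm 𝒞 h𝒞m Ω hΩ htile
  have hcardR : (𝒞.card : ℝ) * volume.real Ω = 1 := by
    have := congrArg ENNReal.toReal hcard
    simpa [Measure.real] using this
  let l : 𝒞 × ℤ → ℝ := fun p => (m : ℝ) * (p.2 : ℝ) + ((p.1 : ℕ) : ℝ)
  have hl : Function.Injective l := by
    rintro ⟨⟨c, hc⟩, t⟩ ⟨⟨c', hc'⟩, t'⟩ h
    simp only [l] at h
    have hcm := Finset.mem_range.mp (h𝒞m hc)
    have hcm' := Finset.mem_range.mp (h𝒞m hc')
    have h' : (m : ℤ) * t + c = m * t' + c' := by exact_mod_cast h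
    have e1 : (c : ℤ) = c' := by
      have a1 := congrArg (· % (m : ℤ)) h'
      simp only [Int.mul_add_emod_self_left] at a1
      rwa [Int.emod_eq_of_lt (by omega) (by omega), Int.emod_eq_of_lt (by omega) (by omega)] at a1
    have e2 : t = t' := by
      rw [e1] at h'
      have : (m : ℤ) * t = m * t' := by linarith
      exact mul_left_cancel₀ (by omega) this
    have e3 : c = c' := by exact_mod_cast e1
    subst e2 e3
    rfl
  have hrange : Λ = Set.range l := by
    rw [hΛ]
    ext x
    constructor
    · rintro ⟨t, c, hc, rfl⟩
      exact ⟨(⟨c, hc⟩, t), rfl⟩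
    · rintro ⟨⟨⟨c, hc⟩, t⟩, rfl⟩
      exact ⟨t, c, hc, rfl⟩
  rw [hrange] at hspec
  obtain ⟨n, hn⟩ : ∃ n : ℤ, volume (Ω ∩ Set.Ioc (n • (1 / (m : ℝ))) (n • (1 / (m : ℝ)) + 1 / m)) ≠ 0 := by
    by_contra hcon
    push Not at hcon
    have h0 := measure_iUnion_null hcon
    have hu := iUnion_Ioc_add_zsmul (show (0 : ℝ) < 1 / m by positivity) 0
    simp only [zero_add, add_zsmul, one_zsmul] at hu
    rw [← Set.inter_iUnion, hu, Set.inter_univ] at h0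
    exact hpos.ne' h0
  let B := Ω ∩ Set.Ioc (n • (1 / (m : ℝ))) (n • (1 / (m : ℝ)) + 1 / m)
  have hB : MeasurableSet B := hΩ.inter measurableSet_Ioc
  have hBpos : 0 < volume.real B :=
    ENNReal.toReal_pos hn ((measure_mono Set.inter_subset_left).trans_lt hfin).ne
  have hS := spectrum_part l hl Ω hΩ hpos hfin hspec B hB Set.inter_subset_left
  have hF := hS.prod_fiberwise
    (fun c : 𝒞 => fourier_part m hm ((c : ℕ) : ℝ) _ B hB Set.inter_subset_right)
  have hG := hF.unique (hasSum_fintype _)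
  simp only [Finset.sum_const, Finset.card_univ, Fintype.card_coe, nsmul_eq_mul] at hG
  have hk : volume.real Ω = 𝒞.card * (1 / m) := by
    apply mul_right_cancel₀ hBpos.ne'
    linarith
  rw [hk] at hcardR
  field_simp at hcardR
  exact_mod_cast hcardR.symm
end
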